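/- arXiv:1304.5775 — 2 statements merged into one kernel-verified Lean document; each statement's English description precedes it below -/
import Mathlib

section
/- Let a ≥ 5 be an integer, let G = Z_V × Z_H be an (a,a)-grid in X = ℙ¹×ℙ¹, let Q ∈ G, and let Z = G \ {Q} be the grid with the single point Q removed, with radical ideal I. Then for all k ≥ 1, α*(I^{(2k−1)}) = ka − 1 and α*(I^{(2k)}) = ka. In particular α*(I) = a − 1, so α*(I) can be arbitrarily large even though the sequence α*(I^{(m)}) has infinitely many jumps equal to 1. -/
open MvPolynomial

noncomputable section

/-- The bi-graded polynomial ring `ℂ[x₀,x₁,y₀,y₁]`: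
the first `Fin 2` summand indexes the variables `x₀,x₁`,
the second the variables `y₀,y₁`. -/
abbrev R4 : Type := MvPolynomial (Fin 2 ⊕ Fin 2) ℂ

/-- The weight function giving the bi-grading of `R4`. -/
def biWeight : Fin 2 ⊕ Fin 2 → ℕ × ℕ := Sum.elim (fun _ => (1, 0)) (fun _ => (0, 1))

/-- `F` is a (possibly zero) form of bidegree `(p,q)`, i.e. homogeneous of degree `p`
in `x₀,x₁` and homogeneous of degree `q` in `y₀,y₁`. -/
def IsBiForm (F : R4) (p q : ℕ) : Prop :=
  IsWeightedHomogeneous biWeight F (p, q)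

/-- The projective line `ℙ¹` over `ℂ`. -/
abbrev ProjLine := Projectivization ℂ (Fin 2 → ℂ)

/-- The bi-homogeneous prime ideal of a point `P = ([a:b],[c:d])` of `X = ℙ¹ × ℙ¹`,
generated by `b·x₀ - a·x₁` and `d·y₀ - c·y₁`. -/
def pointIdeal (P : ProjLine × ProjLine) : Ideal R4 :=
  Ideal.span
    { C (P.1.rep 1) * X (Sum.inl 0) - C (P.1.rep 0) * X (Sum.inl 1),
      C (P.2.rep 1) * X (Sum.inr 0) - C (P.2.rep 0) * X (Sum.inr 1) }

/-- The `m`-th symbolic power of the radical ideal of the finite set of points `Z ⊂ X`: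
`I^{(m)} = ⋂_{P ∈ Z} I(P)^m`.  For `m = 1` this is the radical ideal `I = I(Z)` itself. -/
def symbPow (Z : Finset (ProjLine × ProjLine)) (m : ℕ) : Ideal R4 :=
  ⨅ P ∈ Z, pointIdeal P ^ m

/-- `α*(J)`: the least `t ≥ 0` such that `J` contains a nonzero form of bidegree `(t,t)`. -/
def alphaStar (J : Ideal R4) : ℕ :=
  sInf {t : ℕ | ∃ F ∈ J, F ≠ 0 ∧ IsBiForm F t t}

/-- `α⁺(J)`: the least `d ≥ 0` such that `J` contains a nonzero form of bidegree `(p,q)`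
with `p + q = d`. -/
def alphaPlus (J : Ideal R4) : ℕ :=
  sInf {d : ℕ | ∃ p q : ℕ, p + q = d ∧ ∃ F ∈ J, F ≠ 0 ∧ IsBiForm F p q}

/-!
Let `n = a - 1`. The claim is that `α*(I^{(m)}) = ⌊m/2⌋ + ⌈m/2⌉ n` for every `m`. A product of line
forms attains this value: both lines through `Q` get multiplicity `⌊m/2⌋` and all other lines of the
grid get multiplicity `⌈m/2⌉`.

Conversely, let `F ≠ 0` of bidegree `(t,t)` lie in `I^{(m)}`, with `t` smaller than claimed, so that
`t < n m`. On a vertical line of the grid, `F` restricts to a form of degree `t` with at least `n`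
zeros of multiplicity `m`, hence to `0` by Bézout; so `F` is divisible by all `n + 1` vertical line
forms, which for `m = 1` is impossible because `t < n`. Exactly one of these forms vanishes at a
given point of `Z`, and only to first order, so dividing by their product lowers the vanishing order
by exactly one; this additivity of orders is seen on the normal cone of the point. Repeating the
division with the horizontal lines leaves a form of bidegree `(t-n-1, t-n-1)` in `I^{(m-2)}`, and
induction on `m` applies.
-/

/-- A degeneration of `A` to the normal cone of `I`: a ring homomorphism `δ : A → A[T]`, with
image in the Rees algebra of `I`, that splits the evaluation `T = 1` and sends `I` into `(T)`.
The order of vanishing along `I` can then be read off as the `T`-adic order after applying `δ`. -/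
structure IsConeDegeneration {A : Type*} [CommRing A] (I : Ideal A) (δ : A →+* Polynomial A) :
    Prop where
  eval_one (f : A) : (δ f).eval 1 = f
  mem_reesAlgebra (f : A) : δ f ∈ reesAlgebra I
  X_dvd {f : A} : f ∈ I → Polynomial.X ∣ δ f

namespace IsConeDegeneration

variable {A : Type*} [CommRing A] {I : Ideal A} {δ : A →+* Polynomial A}

theorem mem_pow_iff (hδ : IsConeDegeneration I δ) {f : A} {m : ℕ} :
    f ∈ I ^ m ↔ Polynomial.X ^ m ∣ δ f := by
  constructor
  · intro hf
    have hmap : I.map δ ≤ Ideal.span {Polynomial.X} :=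
      Ideal.map_le_iff_le_comap.2 fun g hg => Ideal.mem_span_singleton.2 (hδ.X_dvd hg)
    rw [← Ideal.mem_span_singleton, ← Ideal.span_singleton_pow]
    exact Ideal.pow_right_mono hmap m (Ideal.map_pow δ I m ▸ Ideal.mem_map_of_mem δ hf)
  · intro hf
    rw [← hδ.eval_one f, Polynomial.eval_eq_sum_range]
    refine Ideal.sum_mem _ fun i _ => ?_
    rw [one_pow, mul_one]
    obtain hi | hi := lt_or_ge i m
    · rw [Polynomial.X_pow_dvd_iff.1 hf i hi]
      exact zero_mem _
    · exact Ideal.pow_le_pow_right hi (hδ.mem_reesAlgebra f i)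

theorem mem_pow_of_mul_mem_pow [IsDomain A] (hδ : IsConeDegeneration I δ) {f g : A} {j m : ℕ}
    (hf : f ∉ I ^ (j + 1)) (hfg : f * g ∈ I ^ (j + m)) : g ∈ I ^ m := by
  rw [hδ.mem_pow_iff, pow_dvd_iff_le_emultiplicity] at hf hfg ⊢
  rw [map_mul, emultiplicity_mul Polynomial.prime_X] at hfg
  have hj : emultiplicity Polynomial.X (δ f) ≤ j :=
    Order.le_of_lt_add_one (by simpa using hf)
  rw [Nat.cast_add] at hfg
  exact (WithTop.add_le_add_iff_left (ENat.natCast_ne_top j)).1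
    (hfg.trans (add_le_add_left hj _))

end IsConeDegeneration

section LinearForms

section CommRing

variable {σ R : Type*} [CommRing R]

/-- The linear form `v₁ X₀ - v₀ X₁` in the pair of variables `X₀, X₁` selected by `e`; on a
projective line with these coordinates it cuts out the point `[v₀ : v₁]`. -/
def lineForm (e : Fin 2 → σ) (v : Fin 2 → R) : MvPolynomial σ R :=
  C (v 1) * X (e 0) - C (v 0) * X (e 1)

theorem map_lineForm {A F : Type*} [CommRing A] [Algebra R A] [FunLike F (MvPolynomial σ R) A]
    [AlgHomClass F R (MvPolynomial σ R) A] (φ : F) (e : Fin 2 → σ) (v : Fin 2 → R) :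
    φ (lineForm e v) =
      algebraMap R A (v 1) * φ (X (e 0)) - algebraMap R A (v 0) * φ (X (e 1)) := by
  rw [lineForm, ← algebraMap_eq, map_sub, map_mul, map_mul, AlgHomClass.commutes,
    AlgHomClass.commutes]

theorem eval_lineForm (z : σ → R) (e : Fin 2 → σ) (v : Fin 2 → R) :
    eval z (lineForm e v) = v 1 * z (e 0) - v 0 * z (e 1) := by
  simp [lineForm]

theorem isHomogeneous_lineForm (e : Fin 2 → σ) (v : Fin 2 → R) :
    (lineForm e v).IsHomogeneous 1 :=
  (isHomogeneous_C_mul_X _ _).sub (isHomogeneous_C_mul_X _ _)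

end CommRing

variable {σ K : Type*} [Field K]

theorem exists_lineForm_splitting {v : Fin 2 → K} (hv : v ≠ 0) :
    ∃ w : Fin 2 → K, v 1 * w 0 - v 0 * w 1 = 1 := by
  by_cases h0 : v 0 = 0
  · have h1 : v 1 ≠ 0 := fun h1 => hv (funext (Fin.forall_fin_two.2 ⟨h0, h1⟩))
    exact ⟨![(v 1)⁻¹, 0], by simp [h1]⟩
  · exact ⟨![0, -(v 0)⁻¹], by simp [h0]⟩

theorem lineForm_ne_zero {e : Fin 2 → σ} (he : e.Injective) {v : Fin 2 → K} (hv : v ≠ 0) :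
    lineForm e v ≠ 0 := by
  obtain ⟨w, hw⟩ := exists_lineForm_splitting hv
  intro h
  have heval := congrArg (eval (Function.extend e w 0)) h
  rw [eval_lineForm, he.extend_apply, he.extend_apply, hw, map_zero] at heval
  exact one_ne_zero heval

theorem irreducible_lineForm {e : Fin 2 → σ} (he : e.Injective) {v : Fin 2 → K} (hv : v ≠ 0) :
    Irreducible (lineForm e v) := by
  have hdeg : (lineForm e v).totalDegree = 1 :=
    (isHomogeneous_lineForm e v).totalDegree (lineForm_ne_zero he hv)
  refine irreducible_of_totalDegree_eq_one hdeg fun x hx => ?_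
  obtain rfl | hx0 := eq_or_ne x 0
  · refine absurd (MvPolynomial.ext _ _ fun d => ?_) (lineForm_ne_zero he hv)
    simpa using hx d
  · exact hx0.isUnit

theorem rep_mul_rep_sub_ne_zero {p q : Projectivization K (Fin 2 → K)} (hpq : p ≠ q) :
    q.rep 1 * p.rep 0 - q.rep 0 * p.rep 1 ≠ 0 := by
  intro hzero
  obtain ⟨w, hw⟩ := exists_lineForm_splitting q.rep_nonzero
  apply hpq
  rw [← p.mk_rep, ← q.mk_rep, Projectivization.mk_eq_mk_iff']
  refine ⟨w 0 * p.rep 1 - w 1 * p.rep 0, funext (Fin.forall_fin_two.2 ⟨?_, ?_⟩)⟩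
  · rw [Pi.smul_apply, smul_eq_mul]
    linear_combination p.rep 0 * hw - w 0 * hzero
  · rw [Pi.smul_apply, smul_eq_mul]
    linear_combination p.rep 1 * hw - w 1 * hzero

theorem isRelPrime_lineForm {e : Fin 2 → σ} (he : e.Injective)
    {p q : Projectivization K (Fin 2 → K)} (hpq : p ≠ q) :
    IsRelPrime (lineForm e p.rep) (lineForm e q.rep) := by
  rw [(irreducible_lineForm he p.rep_nonzero).isRelPrime_iff_not_dvd]
  intro hdvd
  have heval := map_dvd (eval (Function.extend e p.rep 0)) hdvd
  simp only [eval_lineForm, he.extend_apply] at heval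
  rw [mul_comm, sub_self, zero_dvd_iff] at heval
  exact rep_mul_rep_sub_ne_zero hpq heval

theorem totalDegree_prod_lineForm_pow {e : Fin 2 → σ} (he : e.Injective)
    (T : Finset (Projectivization K (Fin 2 → K))) (m : ℕ) :
    (∏ p ∈ T, lineForm e p.rep ^ m).totalDegree = T.card * m := by
  have hhom := IsHomogeneous.prod T (fun p => lineForm e p.rep ^ m) (fun _ => m) fun p _ => by
    simpa using (isHomogeneous_lineForm e p.rep).pow m
  rw [hhom.totalDegree (Finset.prod_ne_zero_iff.2 fun p _ =>
    pow_ne_zero m (lineForm_ne_zero he p.rep_nonzero)), Finset.sum_const, smul_eq_mul]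

end LinearForms

section WeightedHomogeneous

variable {σ τ R M N : Type*}

theorem isWeightedHomogeneous_aeval [CommSemiring R] [AddCommMonoid M] [AddCommMonoid N]
    {w : σ → M} {w' : τ → N} (φ : M →+ N) {g : σ → MvPolynomial τ R} {F : MvPolynomial σ R}
    {n : M} (hF : IsWeightedHomogeneous w F n)
    (hg : ∀ i, IsWeightedHomogeneous w' (g i) (φ (w i))) :
    IsWeightedHomogeneous w' (aeval g F) (φ n) := by
  rw [aeval_def, eval₂_eq]
  refine IsWeightedHomogeneous.sum _ _ _ fun d hd => ?_
  have hprod := IsWeightedHomogeneous.prod d.support (fun i => g i ^ d i) _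
    fun i _ => (hg i).pow (d i)
  rw [← hF (mem_support_iff.1 hd), Finsupp.weight_apply, Finsupp.sum, map_sum]
  simpa only [map_nsmul, algebraMap_eq] using hprod.C_mul (coeff d F)

attribute [local instance] weightedGradedAlgebra in
theorem isWeightedHomogeneous_of_mul [CommRing R] [IsDomain R] [AddCommMonoid M] [PartialOrder M]
    [CanonicallyOrderedAdd M] [Sub M] [OrderedSub M] [AddLeftReflectLE M] {w : σ → M}
    {F G : MvPolynomial σ R} {m n : M} (hF : IsWeightedHomogeneous w F m)
    (hFG : IsWeightedHomogeneous w (F * G) n) (h0 : F * G ≠ 0) :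
    m ≤ n ∧ IsWeightedHomogeneous w G (n - m) := by
  classical
  have hdecomp : (DirectSum.decompose (weightedHomogeneousSubmodule R w) (F * G) n :
      MvPolynomial σ R) = F * G := DirectSum.decompose_of_mem_same _ hFG
  have hmn : m ≤ n := by
    by_contra hmn
    exact h0 (hdecomp.symm.trans (DirectSum.coe_decompose_mul_of_left_mem_of_not_le _ hF hmn))
  rw [DirectSum.coe_decompose_mul_of_left_mem_of_le _ hF hmn] at hdecomp
  have hG := mul_left_cancel₀ (left_ne_zero_of_mul h0) hdecomp
  exact ⟨hmn, hG ▸ (DirectSum.decompose (weightedHomogeneousSubmodule R w) G (n - m)).2⟩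

end WeightedHomogeneous

section NormalDilation

variable {σ R : Type*} [CommRing R]

/-- The substitution `Xᵢ ↦ Xᵢ + (T - 1) nᵢ`, which is the identity at `T = 1`. If the `nᵢ` are
the components of a linear projection onto a complement of a linear subspace, this scales the
directions normal to that subspace by `T`. -/
def normalDilation (n : σ → MvPolynomial σ R) :
    MvPolynomial σ R →ₐ[R] Polynomial (MvPolynomial σ R) :=
  aeval fun i => Polynomial.C (X i) + (Polynomial.X - 1) * Polynomial.C (n i)

theorem eval_one_normalDilation (n : σ → MvPolynomial σ R) (f : MvPolynomial σ R) :
    (normalDilation n f).eval 1 = f := by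
  induction f using MvPolynomial.induction_on with
  | C a => simp [normalDilation, Polynomial.algebraMap_apply]
  | add p q hp hq => rw [map_add, Polynomial.eval_add, hp, hq]
  | mul_X p i hp =>
    rw [map_mul, Polynomial.eval_mul, hp]
    simp [normalDilation]

theorem normalDilation_mem_reesAlgebra {I : Ideal (MvPolynomial σ R)}
    {n : σ → MvPolynomial σ R} (hn : ∀ i, n i ∈ I) (f : MvPolynomial σ R) :
    normalDilation n f ∈ reesAlgebra I := by
  have hC (g : MvPolynomial σ R) : Polynomial.C g ∈ reesAlgebra I :=
    (reesAlgebra I).algebraMap_mem g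
  induction f using MvPolynomial.induction_on with
  | C a =>
    rw [normalDilation, aeval_C]
    exact hC (C a)
  | add p q hp hq =>
    rw [map_add]
    exact add_mem hp hq
  | mul_X p i hp =>
    have hXn : Polynomial.X * Polynomial.C (n i) ∈ reesAlgebra I := by
      rw [Polynomial.X_mul_C, Polynomial.C_mul_X_eq_monomial]
      exact reesAlgebra.monomial_mem.2 (by simpa using hn i)
    rw [map_mul, normalDilation, aeval_X, sub_mul, one_mul]
    exact mul_mem hp (add_mem (hC _) (sub_mem hXn (hC _)))

theorem isConeDegeneration_normalDilation {S : Set (MvPolynomial σ R)}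
    {n : σ → MvPolynomial σ R} (hn : ∀ i, n i ∈ Ideal.span S)
    (hS : ∀ f ∈ S, normalDilation n f = Polynomial.X * Polynomial.C f) :
    IsConeDegeneration (Ideal.span S) (normalDilation n).toRingHom where
  eval_one := eval_one_normalDilation n
  mem_reesAlgebra := normalDilation_mem_reesAlgebra hn
  X_dvd {f} hf := by
    have hle : Ideal.span S ≤
        (Ideal.span {Polynomial.X}).comap (normalDilation n).toRingHom := by
      refine Ideal.span_le.2 fun g hg => Ideal.mem_span_singleton.2 ?_
      exact hS g hg ▸ dvd_mul_right _ _
    exact Ideal.mem_span_singleton.1 (hle hf)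

theorem normalDilation_lineForm {n : σ → MvPolynomial σ R} {e : Fin 2 → σ} {v w : Fin 2 → R}
    (hvw : v 1 * w 0 - v 0 * w 1 = 1) (hn : ∀ i, n (e i) = C (w i) * lineForm e v) :
    normalDilation n (lineForm e v) = Polynomial.X * Polynomial.C (lineForm e v) := by
  have hone : Polynomial.C (C (v 1)) * Polynomial.C (C (w 0)) -
      Polynomial.C (C (v 0)) * Polynomial.C (C (w 1)) = (1 : Polynomial (MvPolynomial σ R)) := by
    simp only [← map_mul, ← map_sub, hvw, map_one]
  have hline : Polynomial.C (lineForm e v) = Polynomial.C (C (v 1)) * Polynomial.C (X (e 0)) -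
      Polynomial.C (C (v 0)) * Polynomial.C (X (e 1)) := by
    simp only [lineForm, map_sub, map_mul]
  rw [map_lineForm, Polynomial.algebraMap_apply, Polynomial.algebraMap_apply, algebraMap_eq]
  simp only [normalDilation, aeval_X, hn, map_mul]
  linear_combination (Polynomial.X - 1) * Polynomial.C (lineForm e v) * hone - hline

end NormalDilation

section PointIdeal

theorem pointIdeal_eq_span (P : ProjLine × ProjLine) :
    pointIdeal P = Ideal.span {lineForm Sum.inl P.1.rep, lineForm Sum.inr P.2.rep} :=
  rfl

theorem lineForm_inl_mem_pointIdeal (P : ProjLine × ProjLine) :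
    lineForm Sum.inl P.1.rep ∈ pointIdeal P :=
  pointIdeal_eq_span P ▸ Ideal.subset_span (Set.mem_insert _ _)

theorem lineForm_inr_mem_pointIdeal (P : ProjLine × ProjLine) :
    lineForm Sum.inr P.2.rep ∈ pointIdeal P :=
  pointIdeal_eq_span P ▸ Ideal.subset_span (Set.mem_insert_of_mem _ rfl)

theorem exists_isConeDegeneration_pointIdeal (P : ProjLine × ProjLine) :
    ∃ δ : R4 →+* Polynomial R4, IsConeDegeneration (pointIdeal P) δ ∧
      δ (lineForm Sum.inl P.1.rep) = Polynomial.X * Polynomial.C (lineForm Sum.inl P.1.rep) := by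
  obtain ⟨u, hu⟩ := exists_lineForm_splitting P.1.rep_nonzero
  obtain ⟨v, hv⟩ := exists_lineForm_splitting P.2.rep_nonzero
  let n : Fin 2 ⊕ Fin 2 → R4 := Sum.elim
    (fun i => C (u i) * lineForm Sum.inl P.1.rep) fun i => C (v i) * lineForm Sum.inr P.2.rep
  have hinl : normalDilation n (lineForm Sum.inl P.1.rep) = _ :=
    normalDilation_lineForm hu fun _ => rfl
  have hinr : normalDilation n (lineForm Sum.inr P.2.rep) = _ :=
    normalDilation_lineForm hv fun _ => rfl
  refine ⟨(normalDilation n).toRingHom, isConeDegeneration_normalDilation ?_ ?_, hinl⟩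
  · rintro (i | i)
    · exact Ideal.mul_mem_left _ _ (lineForm_inl_mem_pointIdeal P)
    · exact Ideal.mul_mem_left _ _ (lineForm_inr_mem_pointIdeal P)
  · rintro f (rfl | rfl)
    exacts [hinl, hinr]

theorem eval_rep_eq_zero_of_mem_pointIdeal {P : ProjLine × ProjLine} {F : R4}
    (hF : F ∈ pointIdeal P) : eval (Sum.elim P.1.rep P.2.rep) F = 0 := by
  have hle : pointIdeal P ≤ RingHom.ker (eval (Sum.elim P.1.rep P.2.rep)) := by
    rw [pointIdeal_eq_span, Ideal.span_le]
    rintro f (rfl | rfl) <;> simp [eval_lineForm, mul_comm]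
  exact hle hF

theorem mem_pointIdeal_pow_of_prod_mul_mem {P : ProjLine × ProjLine} {V : Finset ProjLine}
    (hP : P.1 ∈ V) {G : R4} {m : ℕ}
    (hG : (∏ p ∈ V, lineForm Sum.inl p.rep) * G ∈ pointIdeal P ^ (m + 1)) :
    G ∈ pointIdeal P ^ m := by
  classical
  obtain ⟨δ, hδ, hδP⟩ := exists_isConeDegeneration_pointIdeal P
  have hsimple : lineForm Sum.inl P.1.rep ∉ pointIdeal P ^ 2 := by
    rw [hδ.mem_pow_iff, hδP, pow_two, mul_dvd_mul_iff_left Polynomial.X_ne_zero,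
      Polynomial.X_dvd_iff, Polynomial.coeff_C_zero]
    exact lineForm_ne_zero Sum.inl_injective P.1.rep_nonzero
  have hothers : ∏ p ∈ V.erase P.1, lineForm Sum.inl p.rep ∉ pointIdeal P ^ 1 := by
    rw [pow_one]
    intro hmem
    have heval := eval_rep_eq_zero_of_mem_pointIdeal hmem
    rw [map_prod, Finset.prod_eq_zero_iff] at heval
    obtain ⟨p, hp, hzero⟩ := heval
    rw [eval_lineForm] at hzero
    exact rep_mul_rep_sub_ne_zero (Finset.ne_of_mem_erase hp).symm hzero
  rw [← Finset.mul_prod_erase _ _ hP, mul_assoc, add_comm] at hG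
  refine hδ.mem_pow_of_mul_mem_pow (j := 0) hothers ?_
  rw [zero_add]
  exact hδ.mem_pow_of_mul_mem_pow (j := 1) hsimple hG

theorem mem_symbPow_iff {Z : Finset (ProjLine × ProjLine)} {m : ℕ} {F : R4} :
    F ∈ symbPow Z m ↔ ∀ P ∈ Z, F ∈ pointIdeal P ^ m := by
  simp only [symbPow, Submodule.mem_iInf]

end PointIdeal

section Restriction

theorem IsBiForm.aeval_mul_left {F : R4} {s t : ℕ} (hF : IsBiForm F s t) {A : Type*}
    [CommSemiring A] [Algebra ℂ A] (c : A) (x y : Fin 2 → A) :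
    aeval (Sum.elim (fun i => c * x i) y) F = c ^ s * aeval (Sum.elim x y) F := by
  rw [aeval_def, aeval_def, eval₂_eq', eval₂_eq', Finset.mul_sum]
  refine Finset.sum_congr rfl fun d hd => ?_
  have hs : d (Sum.inl 0) + d (Sum.inl 1) = s := by
    have hweight := congrArg Prod.fst (hF (mem_support_iff.1 hd))
    rw [Finsupp.weight_apply, Finsupp.sum_fintype _ _ (by simp)] at hweight
    simpa [biWeight] using hweight
  simp only [Fintype.prod_sum_type, Fin.prod_univ_two, Sum.elim_inl, Sum.elim_inr, mul_pow]
  rw [← hs, pow_add]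
  ring

/-- Restriction of forms to the vertical line over `p`: the substitution `x = p`, with the
coordinates of `p` regarded as constants. -/
def restrictVertical (p : ProjLine) : R4 →ₐ[ℂ] R4 :=
  aeval (Sum.elim (fun i => C (p.rep i)) fun i => X (Sum.inr i))

theorem IsBiForm.isHomogeneous_restrictVertical {F : R4} {s t : ℕ} (hF : IsBiForm F s t)
    (p : ProjLine) : (restrictVertical p F).IsHomogeneous t := by
  refine isWeightedHomogeneous_aeval (AddMonoidHom.snd ℕ ℕ) hF ?_
  rintro (i | i)
  exacts [isHomogeneous_C _ _, isHomogeneous_X _ _]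

theorem lineForm_pow_dvd_restrictVertical {P : ProjLine × ProjLine} {F : R4} {m : ℕ}
    (hF : F ∈ pointIdeal P ^ m) : lineForm Sum.inr P.2.rep ^ m ∣ restrictVertical P.1 F := by
  have hmap : (pointIdeal P).map (restrictVertical P.1) ≤
      Ideal.span {lineForm Sum.inr P.2.rep} := by
    rw [pointIdeal_eq_span, Ideal.map_span, Ideal.span_le]
    rintro _ ⟨f, rfl | rfl, rfl⟩
    · simp [map_lineForm, restrictVertical, mul_comm]
    · refine Ideal.subset_span ?_
      simp [restrictVertical, lineForm]
  rw [← Ideal.mem_span_singleton, ← Ideal.span_singleton_pow]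
  refine Ideal.pow_right_mono hmap m ?_
  rw [← Ideal.map_pow]
  exact Ideal.mem_map_of_mem _ hF

theorem aeval_sub_aeval_mem {σ K A : Type*} [CommSemiring K] [CommRing A] [Algebra K A]
    {I : Ideal A} {f g : σ → A} (hfg : ∀ i, f i - g i ∈ I) (F : MvPolynomial σ K) :
    aeval f F - aeval g F ∈ I := by
  have hmk : (fun i => Ideal.Quotient.mkₐ K I (f i)) = fun i => Ideal.Quotient.mkₐ K I (g i) :=
    funext fun i => Ideal.Quotient.eq.2 (hfg i)
  rw [← Ideal.Quotient.eq, ← Ideal.Quotient.mkₐ_eq_mk K, comp_aeval_apply, comp_aeval_apply, hmk]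

theorem lineForm_dvd_of_restrictVertical_eq_zero {F : R4} {s t : ℕ} (hF : IsBiForm F s t)
    {p : ProjLine} (hp : restrictVertical p F = 0) : lineForm Sum.inl p.rep ∣ F := by
  obtain ⟨w, hw⟩ := exists_lineForm_splitting p.rep_nonzero
  -- Modulo the line form, `x` equals `c • p` with `c = -lineForm Sum.inl w`, so `F (x, y)` is
  -- congruent to `F (c • p, y) = c ^ s * F (p, y)`.
  let y : Fin 2 → R4 := fun i => X (Sum.inr i)
  have hX (i : Fin 2) : (X (Sum.inl i) + lineForm Sum.inl w * C (p.rep i) : R4) =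
      C (w i) * lineForm Sum.inl p.rep := by
    have hone : (C (p.rep 1) * C (w 0) - C (p.rep 0) * C (w 1) : R4) = 1 := by
      rw [← C_mul, ← C_mul, ← C_sub, hw, C_1]
    fin_cases i <;> simp only [lineForm, Fin.zero_eta, Fin.mk_one]
    · linear_combination -X (Sum.inl 0) * hone
    · linear_combination -X (Sum.inl 1) * hone
  have hmem : aeval X F - aeval (Sum.elim (fun i => -lineForm Sum.inl w * C (p.rep i)) y) F ∈
      Ideal.span {lineForm Sum.inl p.rep} := by
    refine aeval_sub_aeval_mem ?_ F
    rintro (i | i)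
    · rw [Sum.elim_inl, neg_mul, sub_neg_eq_add, hX, Ideal.mem_span_singleton]
      exact dvd_mul_left _ _
    · rw [Sum.elim_inr, sub_self]
      exact zero_mem _
  rw [hF.aeval_mul_left, ← restrictVertical, hp, mul_zero, sub_zero, aeval_X_left_apply] at hmem
  exact Ideal.mem_span_singleton.1 hmem

theorem lineForm_dvd_of_forall_mem_pointIdeal_pow {F : R4} {s t m : ℕ} (hF : IsBiForm F s t)
    {p : ProjLine} {T : Finset ProjLine} (hT : ∀ q ∈ T, F ∈ pointIdeal (p, q) ^ m)
    (ht : t < T.card * m) : lineForm Sum.inl p.rep ∣ F := by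
  refine lineForm_dvd_of_restrictVertical_eq_zero hF ?_
  by_contra hne
  have hdvd : ∏ q ∈ T, lineForm Sum.inr q.rep ^ m ∣ restrictVertical p F :=
    Finset.prod_dvd_of_isRelPrime
      (fun _ _ _ _ hqq' => (isRelPrime_lineForm Sum.inr_injective hqq').pow)
      fun q hq => lineForm_pow_dvd_restrictVertical (P := (p, q)) (hT q hq)
  have hdeg := totalDegree_le_of_dvd_of_isDomain hdvd hne
  rw [totalDegree_prod_lineForm_pow Sum.inr_injective] at hdeg
  exact absurd (hF.isHomogeneous_restrictVertical p).totalDegree_le (ht.trans_le hdeg).not_ge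

end Restriction

section BiForms

theorem isBiForm_lineForm_inl (v : Fin 2 → ℂ) : IsBiForm (lineForm Sum.inl v) 1 0 :=
  ((isWeightedHomogeneous_X ℂ biWeight _).C_mul _).sub
    ((isWeightedHomogeneous_X ℂ biWeight _).C_mul _)

theorem isBiForm_lineForm_inr (v : Fin 2 → ℂ) : IsBiForm (lineForm Sum.inr v) 0 1 :=
  ((isWeightedHomogeneous_X ℂ biWeight _).C_mul _).sub
    ((isWeightedHomogeneous_X ℂ biWeight _).C_mul _)

theorem isBiForm_prod_lineForm_inl (V : Finset ProjLine) (e : ProjLine → ℕ) :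
    IsBiForm (∏ p ∈ V, lineForm Sum.inl p.rep ^ e p) (∑ p ∈ V, e p) 0 := by
  have hprod := IsWeightedHomogeneous.prod V (fun p => lineForm Sum.inl p.rep ^ e p) _
    fun p _ => (isBiForm_lineForm_inl p.rep).pow (e p)
  rw [← Finset.sum_smul] at hprod
  simpa [IsBiForm] using hprod

theorem isBiForm_prod_lineForm_inr (H : Finset ProjLine) (e : ProjLine → ℕ) :
    IsBiForm (∏ q ∈ H, lineForm Sum.inr q.rep ^ e q) 0 (∑ q ∈ H, e q) := by
  have hprod := IsWeightedHomogeneous.prod H (fun q => lineForm Sum.inr q.rep ^ e q) _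
    fun q _ => (isBiForm_lineForm_inr q.rep).pow (e q)
  rw [← Finset.sum_smul] at hprod
  simpa [IsBiForm] using hprod

/-- The automorphism of the bigraded ring induced by exchanging the two factors of `ℙ¹ × ℙ¹`. -/
def swapFactors : R4 ≃ₐ[ℂ] R4 :=
  renameEquiv ℂ (Equiv.sumComm (Fin 2) (Fin 2))

theorem IsBiForm.map_swapFactors {F : R4} {s t : ℕ} (hF : IsBiForm F s t) :
    IsBiForm (swapFactors F) t s := by
  rw [swapFactors, renameEquiv_apply, rename_eq_aeval]
  refine isWeightedHomogeneous_aeval (AddEquiv.prodComm (M := ℕ) (N := ℕ)).toAddMonoidHom hF ?_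
  rintro (i | i)
  exacts [isWeightedHomogeneous_X ℂ biWeight _, isWeightedHomogeneous_X ℂ biWeight _]

theorem map_swapFactors_pointIdeal (P : ProjLine × ProjLine) :
    (pointIdeal P).map swapFactors = pointIdeal P.swap := by
  rw [pointIdeal_eq_span, pointIdeal_eq_span, Ideal.map_span, Set.image_pair, Set.pair_comm]
  simp [swapFactors, lineForm]

theorem swapFactors_mem_symbPow {Z Z' : Finset (ProjLine × ProjLine)}
    (hZ : ∀ P ∈ Z', P.swap ∈ Z) {F : R4} {m : ℕ} (hF : F ∈ symbPow Z m) :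
    swapFactors F ∈ symbPow Z' m := by
  refine mem_symbPow_iff.2 fun P hP => ?_
  rw [← P.swap_swap, ← map_swapFactors_pointIdeal, ← Ideal.map_pow]
  exact Ideal.mem_map_of_mem _ (mem_symbPow_iff.1 hF _ (hZ P hP))

end BiForms

theorem half_add_half_mul_le_mul {n : ℕ} (hn : 1 ≤ n) (m : ℕ) :
    m / 2 + (m + 1) / 2 * n ≤ n * m := calc
  m / 2 + (m + 1) / 2 * n ≤ m / 2 * n + (m + 1) / 2 * n := by
    gcongr
    exact Nat.le_mul_of_pos_right _ hn
  _ = (m / 2 + (m + 1) / 2) * n := (add_mul _ _ _).symm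
  _ = n * m := by rw [mul_comm, show m / 2 + (m + 1) / 2 = m by omega]

/-- `Z` is a subset of the grid `V × H` that contains at least `n` points on each of the vertical
lines over `V` and on each of the horizontal lines over `H`. -/
structure IsThickSubgrid (V H : Finset ProjLine) (n : ℕ) (Z : Finset (ProjLine × ProjLine)) :
    Prop where
  subset : Z ⊆ V ×ˢ H
  vertical : ∀ p ∈ V, ∃ T : Finset ProjLine, n ≤ T.card ∧ ∀ q ∈ T, (p, q) ∈ Z
  horizontal : ∀ q ∈ H, ∃ T : Finset ProjLine, n ≤ T.card ∧ ∀ p ∈ T, (p, q) ∈ Z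

namespace IsThickSubgrid

variable {V H : Finset ProjLine} {n : ℕ} {Z : Finset (ProjLine × ProjLine)}

theorem swap (hZ : IsThickSubgrid V H n Z) :
    IsThickSubgrid H V n (Z.map (Equiv.prodComm ProjLine ProjLine).toEmbedding) where
  subset P hP := by
    have hsub := Finset.mem_product.1 (hZ.subset (Finset.mem_map_equiv.1 hP))
    exact Finset.mem_product.2 ⟨hsub.2, hsub.1⟩
  vertical q hq := by
    obtain ⟨T, hT, hTZ⟩ := hZ.horizontal q hq
    exact ⟨T, hT, fun p hp => Finset.mem_map_equiv.2 (hTZ p hp)⟩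
  horizontal p hp := by
    obtain ⟨T, hT, hTZ⟩ := hZ.vertical p hp
    exact ⟨T, hT, fun q hq => Finset.mem_map_equiv.2 (hTZ q hq)⟩

theorem prod_lineForm_inl_dvd (hZ : IsThickSubgrid V H n Z) {F : R4} {s t m : ℕ}
    (hF : IsBiForm F s t) (hmem : F ∈ symbPow Z m) (ht : t < n * m) :
    ∏ p ∈ V, lineForm Sum.inl p.rep ∣ F := by
  refine Finset.prod_dvd_of_isRelPrime
    (fun _ _ _ _ hpp' => isRelPrime_lineForm Sum.inl_injective hpp') fun p hp => ?_
  obtain ⟨T, hT, hTZ⟩ := hZ.vertical p hp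
  exact lineForm_dvd_of_forall_mem_pointIdeal_pow hF
    (fun q hq => mem_symbPow_iff.1 hmem _ (hTZ q hq)) (ht.trans_le (Nat.mul_le_mul_right m hT))

theorem exists_vertical_quotient (hZ : IsThickSubgrid V H n Z) {F : R4} {s t m : ℕ} (h0 : F ≠ 0)
    (hF : IsBiForm F s t) (hmem : F ∈ symbPow Z (m + 1)) (ht : t < n * (m + 1)) :
    V.card ≤ s ∧ ∃ G ≠ 0, IsBiForm G (s - V.card) t ∧ G ∈ symbPow Z m := by
  obtain ⟨G, rfl⟩ := hZ.prod_lineForm_inl_dvd hF hmem ht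
  have hprod := isBiForm_prod_lineForm_inl V fun _ => 1
  simp only [pow_one, Finset.sum_const, smul_eq_mul, mul_one] at hprod
  obtain ⟨hle, hG⟩ := isWeightedHomogeneous_of_mul hprod hF h0
  refine ⟨hle.1, G, right_ne_zero_of_mul h0, hG, mem_symbPow_iff.2 fun P hP => ?_⟩
  exact mem_pointIdeal_pow_of_prod_mul_mem (Finset.mem_product.1 (hZ.subset hP)).1
    (mem_symbPow_iff.1 hmem P hP)

theorem exists_horizontal_quotient (hZ : IsThickSubgrid V H n Z) {F : R4} {s t m : ℕ}
    (h0 : F ≠ 0) (hF : IsBiForm F s t) (hmem : F ∈ symbPow Z (m + 1)) (hs : s < n * (m + 1)) :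
    H.card ≤ t ∧ ∃ G ≠ 0, IsBiForm G s (t - H.card) ∧ G ∈ symbPow Z m := by
  have hswap : swapFactors F ∈
      symbPow (Z.map (Equiv.prodComm ProjLine ProjLine).toEmbedding) (m + 1) :=
    swapFactors_mem_symbPow (fun _ => Finset.mem_map_equiv.1) hmem
  obtain ⟨hle, G, hG0, hG, hGmem⟩ := hZ.swap.exists_vertical_quotient
    ((map_ne_zero_iff _ swapFactors.injective).2 h0) hF.map_swapFactors hswap hs
  exact ⟨hle, swapFactors G, (map_ne_zero_iff _ swapFactors.injective).2 hG0, hG.map_swapFactors,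
    swapFactors_mem_symbPow (fun _ => Finset.mem_map_of_mem _) hGmem⟩

theorem le_of_mem_symbPow (hZ : IsThickSubgrid V H n Z) (hn : 1 ≤ n) (hV : V.card = n + 1)
    (hH : H.card = n + 1) {F : R4} {m t : ℕ} (h0 : F ≠ 0) (hF : IsBiForm F t t)
    (hmem : F ∈ symbPow Z m) : m / 2 + (m + 1) / 2 * n ≤ t := by
  induction m using Nat.twoStepInduction generalizing F t with
  | zero => simp
  | one =>
    by_contra! hlt
    have ht := hlt.trans_le (half_add_half_mul_le_mul hn 1)
    obtain ⟨hVt, -⟩ := hZ.exists_vertical_quotient h0 hF hmem ht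
    omega
  | more m ih _ =>
    by_contra! hlt
    have ht := hlt.trans_le (half_add_half_mul_le_mul hn (m + 2))
    obtain ⟨hVt, G, hG0, hG, hGmem⟩ := hZ.exists_vertical_quotient h0 hF hmem ht
    rw [show (m + 2) / 2 = m / 2 + 1 by omega, show (m + 2 + 1) / 2 = (m + 1) / 2 + 1 by omega,
      add_one_mul] at hlt
    have hsmall : t - V.card < n * (m + 1) := by
      have hm := half_add_half_mul_le_mul hn m
      rw [mul_add_one]
      omega
    obtain ⟨-, G', hG'0, hG', hG'mem⟩ := hZ.exists_horizontal_quotient hG0 hG hGmem hsmall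
    rw [hV, hH] at hG'
    have hle := ih hG'0 hG' hG'mem
    omega

end IsThickSubgrid

theorem isThickSubgrid_erase [DecidableEq ProjLine] {V H : Finset ProjLine} {n : ℕ}
    (hV : n + 1 ≤ V.card) (hH : n + 1 ≤ H.card) (Q : ProjLine × ProjLine) :
    IsThickSubgrid V H n ((V ×ˢ H).erase Q) where
  subset := Finset.erase_subset _ _
  vertical p hp := by
    refine ⟨H.erase Q.2, ?_, fun q hq => ?_⟩
    · exact (Nat.le_sub_of_add_le hH).trans Finset.pred_card_le_card_erase
    · rw [Finset.mem_erase] at hq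
      exact Finset.mem_erase.2 ⟨fun h => hq.1 (congrArg Prod.snd h), Finset.mk_mem_product hp hq.2⟩
  horizontal q hq := by
    refine ⟨V.erase Q.1, ?_, fun p hp => ?_⟩
    · exact (Nat.le_sub_of_add_le hV).trans Finset.pred_card_le_card_erase
    · rw [Finset.mem_erase] at hp
      exact Finset.mem_erase.2 ⟨fun h => hp.1 (congrArg Prod.fst h), Finset.mk_mem_product hp.2 hq⟩

theorem prod_pow_mem_pow {ι A : Type*} [CommSemiring A] {I : Ideal A} {s : Finset ι} {f : ι → A}
    {i : ι} (hi : i ∈ s) (hf : f i ∈ I) (e : ι → ℕ) : ∏ j ∈ s, f j ^ e j ∈ I ^ e i :=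
  Ideal.mem_of_dvd _ (Finset.dvd_prod_of_mem (fun j => f j ^ e j) hi) (Ideal.pow_mem_pow hf _)

theorem sum_ite_eq_add_mul {α : Type*} [DecidableEq α] {s : Finset α} {n : ℕ}
    (hs : s.card = n + 1) {a : α} (ha : a ∈ s) (b c : ℕ) :
    ∑ x ∈ s, (if x = a then b else c) = b + c * n := by
  rw [← Finset.add_sum_erase _ _ ha, if_pos rfl,
    Finset.sum_congr rfl fun x hx => if_neg (Finset.ne_of_mem_erase hx), Finset.sum_const,
    Finset.card_erase_of_mem ha, hs, Nat.add_sub_cancel, smul_eq_mul, mul_comm]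

section UpperBound

variable {V H : Finset ProjLine} {Z : Finset (ProjLine × ProjLine)}

theorem prod_lineForm_mul_prod_lineForm_mem_symbPow (hZ : Z ⊆ V ×ˢ H) {e e' : ProjLine → ℕ}
    {m : ℕ} (hm : ∀ P ∈ Z, m ≤ e P.1 + e' P.2) :
    (∏ p ∈ V, lineForm Sum.inl p.rep ^ e p) * ∏ q ∈ H, lineForm Sum.inr q.rep ^ e' q ∈
      symbPow Z m := by
  refine mem_symbPow_iff.2 fun P hP => Ideal.pow_le_pow_right (hm P hP) ?_
  obtain ⟨hP1, hP2⟩ := Finset.mem_product.1 (hZ hP)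
  have hvertical : (∏ p ∈ V, lineForm Sum.inl p.rep ^ e p : R4) ∈ pointIdeal P ^ e P.1 :=
    prod_pow_mem_pow hP1 (lineForm_inl_mem_pointIdeal P) e
  have hhorizontal : (∏ q ∈ H, lineForm Sum.inr q.rep ^ e' q : R4) ∈ pointIdeal P ^ e' P.2 :=
    prod_pow_mem_pow hP2 (lineForm_inr_mem_pointIdeal P) e'
  rw [pow_add]
  exact Ideal.mul_mem_mul hvertical hhorizontal

theorem exists_isBiForm_mem_symbPow (hZ : Z ⊆ V ×ˢ H) {e e' : ProjLine → ℕ} {m : ℕ}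
    (hm : ∀ P ∈ Z, m ≤ e P.1 + e' P.2) :
    ∃ F ∈ symbPow Z m, F ≠ 0 ∧ IsBiForm F (∑ p ∈ V, e p) (∑ q ∈ H, e' q) := by
  refine ⟨_, prod_lineForm_mul_prod_lineForm_mem_symbPow hZ hm, mul_ne_zero ?_ ?_, ?_⟩
  · exact Finset.prod_ne_zero_iff.2 fun p _ =>
      pow_ne_zero _ (lineForm_ne_zero Sum.inl_injective p.rep_nonzero)
  · exact Finset.prod_ne_zero_iff.2 fun q _ =>
      pow_ne_zero _ (lineForm_ne_zero Sum.inr_injective q.rep_nonzero)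
  · simpa [IsBiForm] using
      (isBiForm_prod_lineForm_inl V e).mul (isBiForm_prod_lineForm_inr H e')

end UpperBound

theorem alphaStar_symbPow_grid_erase [DecidableEq ProjLine] {V H : Finset ProjLine} {n : ℕ}
    (hn : 1 ≤ n) (hV : V.card = n + 1) (hH : H.card = n + 1) {Q : ProjLine × ProjLine}
    (hQ : Q ∈ V ×ˢ H) (m : ℕ) :
    alphaStar (symbPow ((V ×ˢ H).erase Q) m) = m / 2 + (m + 1) / 2 * n := by
  have hthick := isThickSubgrid_erase hV.ge hH.ge Q
  obtain ⟨hQ1, hQ2⟩ := Finset.mem_product.1 hQ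
  refine IsLeast.csInf_eq ⟨?_, fun t ⟨F, hmem, h0, hF⟩ =>
    hthick.le_of_mem_symbPow hn hV hH h0 hF hmem⟩
  have hform := exists_isBiForm_mem_symbPow (m := m) hthick.subset
    (e := fun p => if p = Q.1 then m / 2 else (m + 1) / 2)
    (e' := fun q => if q = Q.2 then m / 2 else (m + 1) / 2) fun P hP => by
      have hne : ¬ (P.1 = Q.1 ∧ P.2 = Q.2) := fun h => Finset.ne_of_mem_erase hP (Prod.ext h.1 h.2)
      split_ifs <;> first | omega | tauto
  rwa [sum_ite_eq_add_mul hV hQ1, sum_ite_eq_add_mul hH hQ2] at hform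

theorem alphaStar_grid_minus_point_general (a : ℕ) (ha : 2 ≤ a)
    (ZV ZH : Finset ProjLine) (hV : ZV.card = a) (hH : ZH.card = a)
    (Q : ProjLine × ProjLine) (hQ : Q ∈ ZV ×ˢ ZH)
    (Z : Finset (ProjLine × ProjLine))
    (hZ : (Z : Set (ProjLine × ProjLine)) = ↑(ZV ×ˢ ZH) \ {Q}) :
    (∀ k : ℕ, 1 ≤ k →
        alphaStar (symbPow Z (2 * k - 1)) = k * a - 1 ∧
        alphaStar (symbPow Z (2 * k)) = k * a) ∧
    alphaStar (symbPow Z 1) = a - 1 := by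
  classical
  obtain rfl : Z = (ZV ×ˢ ZH).erase Q := Finset.coe_injective (by rw [hZ, Finset.coe_erase])
  obtain ⟨n, rfl⟩ : ∃ n, a = n + 1 := ⟨a - 1, by omega⟩
  have hα := alphaStar_symbPow_grid_erase (Nat.le_of_succ_le_succ ha) hV hH hQ
  refine ⟨fun k hk => ⟨?_, ?_⟩, ?_⟩
  · rw [hα, show (2 * k - 1) / 2 = k - 1 by omega, show (2 * k - 1 + 1) / 2 = k by omega,
      mul_add_one]
    omega
  · rw [hα, show 2 * k / 2 = k by omega, show (2 * k + 1) / 2 = k by omega, mul_add_one, add_comm]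
  · simp [hα]

/-- For `a ≥ 5` and `Z` an `(a,a)`-grid in `ℙ¹ × ℙ¹` minus a single point `Q`, with radical
ideal `I`, one has `α*(I^{(2k-1)}) = ka - 1` and `α*(I^{(2k)}) = ka` for all `k ≥ 1`.
In particular `α*(I) = a - 1`. -/
theorem alphaStar_grid_minus_point (a : ℕ) (ha : 5 ≤ a)
    (ZV ZH : Finset ProjLine) (hV : ZV.card = a) (hH : ZH.card = a)
    (Q : ProjLine × ProjLine) (hQ : Q ∈ ZV ×ˢ ZH)
    (Z : Finset (ProjLine × ProjLine))
    (hZ : (Z : Set (ProjLine × ProjLine)) = ↑(ZV ×ˢ ZH) \ {Q}) :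
    (∀ k : ℕ, 1 ≤ k →
        alphaStar (symbPow Z (2 * k - 1)) = k * a - 1 ∧
        alphaStar (symbPow Z (2 * k)) = k * a) ∧
    alphaStar (symbPow Z 1) = a - 1 :=
  alphaStar_grid_minus_point_general a (by omega) ZV ZH hV hH Q hQ Z hZ
end
end

section
/- Let Z = {P₁,…,P_s} be a finite set of distinct points of X = ℙ¹×ℙ¹ with radical ideal I. If α⁺(I^{(m+1)}) = α⁺(I^{(m)}) + 1 for some integer m ≥ 1, then all the points P₁,…,P_s lie on a single vertical or horizontal fiber; that is, either all Pᵢ have the same first coordinate in ℙ¹, or all Pᵢ have the same second coordinate in ℙ¹. -/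
open MvPolynomial

noncomputable section

/-!
Let `F` be a form of minimal degree in `I^{(m+1)}` and `f(x, y)` its restriction to an affine chart
containing `Z`; the form cannot be traded for one of degree lower by two in `I^{(m)}`.

Suppose that `f` has an irreducible factor `g` of bidegree `(a, b)` with `a, b ≥ 1`, with
multiplicities `μ_P` at the points of `Z`. Bézout's inequality for `g` and `∂g/∂x` gives
`∑ μ_P (μ_P - 1) ≤ 2ab - b < 2ab`, so counting conditions produces an adjoint curve: some
`h ≠ 0` of smaller degree than `g` in both variables with multiplicity at least `μ_P - 1` at every
`P`. Replacing `g` by `h` in `f` is then such a trade, which is impossible.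

Hence `f = u(x) w(y)`. Let `A` be the set of roots of `u` and `B` the set of roots of `w` of
multiplicity at least `m + 1`. Every point of `Z` lies on one of the lines `x = a`, `a ∈ A`, or
`y = b`, `b ∈ B`, and dividing `f` once by all of these lines stays in `I^{(m)}`. So
`|A| + |B| ≤ 1`, and `Z` lies on a single line.

Bézout's inequality `∑ μ_P ν_P ≤ g · h` is itself a dimension count: for coprime `g`, `h` with
multiplicities `μ`, `ν`, the subspaces `g V_ν` and `h V_μ` of `V_{μ+ν}`, where `V_κ` consists of the
polynomials of large bidegree with multiplicities `κ`, meet only in multiples of `g h`.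
-/

section OrderOfVanishing

variable {σ R : Type*} [CommRing R]

/-- The automorphism `X i ↦ X i + P i`: it moves the point `P` to the origin, so that the
coefficients of `translateAt P f` are the Taylor coefficients of `f` at `P`. -/
def translateAt (P : σ → R) : MvPolynomial σ R ≃ₐ[R] MvPolynomial σ R :=
  AlgEquiv.ofAlgHom (aeval fun i ↦ X i + C (P i)) (aeval fun i ↦ X i - C (P i))
    (algHom_ext fun i ↦ by simp [algHom_C])
    (algHom_ext fun i ↦ by simp [algHom_C])

@[simp]
lemma translateAt_X (P : σ → R) (i : σ) : translateAt P (X i) = X i + C (P i) := by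
  simp [translateAt]

@[simp]
lemma translateAt_C (P : σ → R) (a : R) : translateAt P (C a) = C a :=
  (translateAt P).commutes a

lemma constantCoeff_translateAt (P : σ → R) (f : MvPolynomial σ R) :
    constantCoeff (translateAt P f) = eval P f := by
  have : constantCoeff.comp (translateAt P : MvPolynomial σ R →+* MvPolynomial σ R) = eval P := by
    apply MvPolynomial.ringHom_ext <;> simp
  exact DFunLike.congr_fun this f

lemma translateAt_pderiv (P : σ → R) (i : σ) (f : MvPolynomial σ R) :
    translateAt P (pderiv i f) = pderiv i (translateAt P f) := by
  classical
  induction f using MvPolynomial.induction_on with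
  | C a => simp
  | add p q hp hq => simp [hp, hq]
  | mul_X p j hp => by_cases hij : j = i <;> simp [hp, pderiv_X, hij]

/-- The order of vanishing (multiplicity) of `f` at `P`; it is `⊤` exactly when `f = 0`. -/
def ordAt (P : σ → R) (f : MvPolynomial σ R) : ℕ∞ :=
  (translateAt P f : MvPowerSeries σ R).order

lemma le_ordAt_iff {P : σ → R} {f : MvPolynomial σ R} {n : ℕ} :
    n ≤ ordAt P f ↔ ∀ d : σ →₀ ℕ, d.degree < n → coeff d (translateAt P f) = 0 := by
  refine ⟨fun h d hd ↦ ?_, fun h ↦ MvPowerSeries.nat_le_order fun d hd ↦ by simpa using h d hd⟩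
  have hd' : (d.degree : ℕ∞) < ordAt P f := lt_of_lt_of_le (mod_cast hd) h
  simpa using MvPowerSeries.coeff_of_lt_order hd'

@[simp]
lemma ordAt_zero (P : σ → R) : ordAt P 0 = ⊤ := by
  simp [ordAt]

lemma min_ordAt_le_ordAt_add (P : σ → R) (f g : MvPolynomial σ R) :
    min (ordAt P f) (ordAt P g) ≤ ordAt P (f + g) := by
  simpa [ordAt] using MvPowerSeries.min_order_le_add

lemma ordAt_ne_top {P : σ → R} {f : MvPolynomial σ R} (hf : f ≠ 0) : ordAt P f ≠ ⊤ := by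
  simpa [ordAt] using hf

lemma ordAt_eq_zero_iff {P : σ → R} {f : MvPolynomial σ R} :
    ordAt P f = 0 ↔ eval P f ≠ 0 := by
  rw [← constantCoeff_translateAt, iff_not_comm, eq_comm, ← ne_eq, ordAt,
    MvPowerSeries.order_ne_zero_iff_constCoeff_eq_zero]
  simp [← MvPowerSeries.coeff_zero_eq_constantCoeff_apply, constantCoeff_eq, eq_comm]

lemma natSub_one_le_ordAt_pderiv {P : σ → R} {f : MvPolynomial σ R} {n : ℕ} (i : σ)
    (h : n ≤ ordAt P f) : (n - 1 : ℕ) ≤ ordAt P (pderiv i f) := by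
  rw [le_ordAt_iff] at h ⊢
  intro d hd
  rw [translateAt_pderiv, coeff_pderiv, h, zero_mul]
  simpa using Nat.add_lt_of_lt_sub hd

lemma ordAt_C {P : σ → R} {a : R} (ha : a ≠ 0) : ordAt P (C a) = 0 := by
  simpa [ordAt_eq_zero_iff] using ha

section NoZeroDivisors

variable [NoZeroDivisors R]

lemma ordAt_mul (P : σ → R) (f g : MvPolynomial σ R) :
    ordAt P (f * g) = ordAt P f + ordAt P g := by
  simp [ordAt, MvPowerSeries.order_mul]

lemma ordAt_pow [Nontrivial R] (P : σ → R) (f : MvPolynomial σ R) (n : ℕ) :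
    ordAt P (f ^ n) = n * ordAt P f := by
  induction n with
  | zero => simpa using ordAt_C (P := P) one_ne_zero
  | succ n ih => rw [pow_succ, ordAt_mul, ih, Nat.cast_succ, add_one_mul]

/-- The ideal of polynomials vanishing to order at least `k` at `P`. -/
def vanishingOrderIdeal (P : σ → R) (k : ℕ) : Ideal (MvPolynomial σ R) where
  carrier := {f | k ≤ ordAt P f}
  add_mem' hf hg := (le_min hf hg).trans (min_ordAt_le_ordAt_add P _ _)
  zero_mem' := by simp
  smul_mem' c f hf := hf.trans (le_add_self.trans_eq (ordAt_mul P c f).symm)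

lemma mem_vanishingOrderIdeal {P : σ → R} {k : ℕ} {f : MvPolynomial σ R} :
    f ∈ vanishingOrderIdeal P k ↔ k ≤ ordAt P f :=
  Iff.rfl

lemma vanishingOrderIdeal_one_pow_le (P : σ → R) (m : ℕ) :
    vanishingOrderIdeal P 1 ^ m ≤ vanishingOrderIdeal P m := by
  induction m with
  | zero => intro f _; simp [mem_vanishingOrderIdeal]
  | succ m ih =>
    rw [pow_succ, Ideal.mul_le]
    intro f hf g hg
    rw [mem_vanishingOrderIdeal, ordAt_mul, Nat.cast_succ]
    exact add_le_add (ih hf) (by simpa using mem_vanishingOrderIdeal.mp hg)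

lemma X_sub_C_pow_mem_vanishingOrderIdeal (P : σ → R) (i : σ) (k : ℕ) :
    (X i - C (P i)) ^ k ∈ vanishingOrderIdeal P k := by
  refine vanishingOrderIdeal_one_pow_le P k (Ideal.pow_mem_pow ?_ k)
  simp [mem_vanishingOrderIdeal, Order.one_le_iff_ne_zero, ordAt_eq_zero_iff]

end NoZeroDivisors

end OrderOfVanishing

section FatPoints

variable {σ K : Type*} [Field K]

/-- The ideal of the fat points `∑ P ∈ S, μ P • P`: polynomials vanishing to order at least `μ P`
at every `P ∈ S`. -/
def fatPointIdeal (S : Finset (σ → K)) (μ : (σ → K) → ℕ) : Ideal (MvPolynomial σ K) :=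
  ⨅ P ∈ S, vanishingOrderIdeal P (μ P)

variable {S : Finset (σ → K)} {μ ν : (σ → K) → ℕ} {f g : MvPolynomial σ K}

lemma mem_fatPointIdeal : f ∈ fatPointIdeal S μ ↔ ∀ P ∈ S, μ P ≤ ordAt P f := by
  simp [fatPointIdeal, Submodule.mem_iInf, mem_vanishingOrderIdeal]

lemma mul_mem_fatPointIdeal_add (hf : f ∈ fatPointIdeal S μ) (hg : g ∈ fatPointIdeal S ν) :
    f * g ∈ fatPointIdeal S (μ + ν) := by
  rw [mem_fatPointIdeal] at hf hg ⊢
  intro P hP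
  simpa [ordAt_mul] using add_le_add (hf P hP) (hg P hP)

lemma pderiv_mem_fatPointIdeal (i : σ) (hf : f ∈ fatPointIdeal S μ) :
    pderiv i f ∈ fatPointIdeal S fun P ↦ μ P - 1 :=
  mem_fatPointIdeal.mpr fun P hP ↦
    natSub_one_le_ordAt_pderiv i (mem_fatPointIdeal.mp hf P hP)

lemma isCoprime_vanishingOrderIdeal {P Q : σ → K} (h : P ≠ Q) (k l : ℕ) :
    IsCoprime (vanishingOrderIdeal P k) (vanishingOrderIdeal Q l) := by
  obtain ⟨i, hi⟩ := Function.ne_iff.mp h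
  have hX : IsCoprime (X i - C (P i)) (X i - C (Q i)) := by
    have := (Polynomial.isCoprime_X_sub_C_of_isUnit_sub (sub_ne_zero.mpr hi).isUnit).map
      (Polynomial.toMvPolynomial i : Polynomial K →ₐ[K] MvPolynomial σ K).toRingHom
    simpa using this
  obtain ⟨a, b, hab⟩ : IsCoprime ((X i - C (P i)) ^ k) ((X i - C (Q i)) ^ l) := hX.pow
  exact Ideal.isCoprime_iff_exists.mpr
    ⟨_, Ideal.mul_mem_left _ a (X_sub_C_pow_mem_vanishingOrderIdeal P i k),
      _, Ideal.mul_mem_left _ b (X_sub_C_pow_mem_vanishingOrderIdeal Q i l), hab⟩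

/-- The Taylor coefficients of order less than `μ P` at every `P ∈ S`. -/
def jets (S : Finset (σ → K)) (μ : (σ → K) → ℕ) :
    MvPolynomial σ K →ₗ[K] (P : S) → {d : σ →₀ ℕ // d.degree < μ P} → K :=
  LinearMap.pi fun P ↦ LinearMap.pi fun d ↦ (lcoeff K d.1).comp (translateAt P.1).toLinearMap

lemma jets_apply (P : S) (d : {d : σ →₀ ℕ // d.degree < μ P}) :
    jets S μ f P d = coeff d.1 (translateAt P.1 f) :=
  rfl

lemma ker_jets : LinearMap.ker (jets S μ) = (fatPointIdeal S μ).restrictScalars K := by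
  ext f
  simp [mem_fatPointIdeal, le_ordAt_iff, funext_iff, jets_apply]

instance [Finite σ] (k : ℕ) : Finite {d : σ →₀ ℕ // d.degree < k} :=
  (Finsupp.finite_of_degree_lt k).to_subtype

lemma jets_surjective [Finite σ] : Function.Surjective (jets S μ) := by
  classical
  intro c
  cases nonempty_fintype σ
  have (P : S) : Fintype {d : σ →₀ ℕ // d.degree < μ P} := Fintype.ofFinite _
  let taylor (P : S) : MvPolynomial σ K := ∑ d, monomial d.1 (c P d)
  obtain ⟨f, hf⟩ := Ideal.exists_forall_sub_mem_ideal
    (I := fun P : S ↦ vanishingOrderIdeal P.1 (μ P))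
    (fun P Q hPQ ↦ isCoprime_vanishingOrderIdeal (Subtype.coe_ne_coe.mpr hPQ) _ _)
    (fun P ↦ (translateAt P.1).symm (taylor P))
  refine ⟨f, ?_⟩
  ext P d
  have hd := le_ordAt_iff.mp (mem_vanishingOrderIdeal.mp (hf P)) d.1 d.2
  rw [map_sub, AlgEquiv.apply_symm_apply, coeff_sub, sub_eq_zero] at hd
  simp [jets_apply, hd, taylor, coeff_sum, coeff_monomial, Subtype.val_inj]

end FatPoints

section Bidegree

/-- The polynomials in two variables of degree less than `M` in the first variable and less than `N`
in the second. -/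
def bidegreeLT (K : Type*) [CommSemiring K] (M N : ℕ) : Submodule K (MvPolynomial (Fin 2) K) :=
  restrictSupport K {d | d 0 < M ∧ d 1 < N}

variable {K : Type*} [Field K] {M N M' N' : ℕ} {f g : MvPolynomial (Fin 2) K}

lemma mem_bidegreeLT : f ∈ bidegreeLT K M N ↔ ∀ d ∈ f.support, d 0 < M ∧ d 1 < N := by
  rw [bidegreeLT, mem_restrictSupport_iff]
  rfl

lemma mem_bidegreeLT_iff_degreeOf (hf : f ≠ 0) :
    f ∈ bidegreeLT K M N ↔ degreeOf 0 f < M ∧ degreeOf 1 f < N := by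
  rw [mem_bidegreeLT, forall₂_and]
  refine and_congr ⟨fun h ↦ ?_, fun h d hd ↦ (monomial_le_degreeOf 0 hd).trans_lt h⟩
    ⟨fun h ↦ ?_, fun h d hd ↦ (monomial_le_degreeOf 1 hd).trans_lt h⟩ <;>
  · obtain ⟨d, hd⟩ := support_nonempty.mpr hf
    exact (degreeOf_lt_iff (Nat.zero_lt_of_lt (h d hd))).mpr h

lemma bidegreeLT_mono (hM : M ≤ M') (hN : N ≤ N') : bidegreeLT K M N ≤ bidegreeLT K M' N' :=
  restrictSupport_mono _ fun _ hd ↦ ⟨hd.1.trans_le hM, hd.2.trans_le hN⟩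

lemma exists_mem_bidegreeLT (f : MvPolynomial (Fin 2) K) : ∃ n, f ∈ bidegreeLT K n n := by
  refine ⟨degreeOf 0 f + degreeOf 1 f + 1, mem_bidegreeLT.mpr fun d hd ↦ ?_⟩
  have h0 := monomial_le_degreeOf 0 hd
  have h1 := monomial_le_degreeOf 1 hd
  omega

lemma mul_mem_bidegreeLT (hg : g ∈ bidegreeLT K (M - degreeOf 0 f) (N - degreeOf 1 f)) :
    f * g ∈ bidegreeLT K M N := by
  rcases eq_or_ne f 0 with rfl | hf
  · simp
  rcases eq_or_ne g 0 with rfl | hg0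
  · simp
  rw [mem_bidegreeLT_iff_degreeOf hg0] at hg
  rw [mem_bidegreeLT_iff_degreeOf (mul_ne_zero hf hg0), degreeOf_mul_eq hf hg0,
    degreeOf_mul_eq hf hg0]
  omega

/-- The exponents of the monomials in `bidegreeLT K M N`. -/
def bidegreeLTEquiv (M N : ℕ) : {d : Fin 2 →₀ ℕ | d 0 < M ∧ d 1 < N} ≃ Fin M × Fin N where
  toFun d := (⟨d.1 0, d.2.1⟩, ⟨d.1 1, d.2.2⟩)
  invFun x := ⟨Finsupp.single 0 x.1.1 + Finsupp.single 1 x.2.1, by simp⟩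
  left_inv d := by ext i; fin_cases i <;> simp
  right_inv x := by ext <;> simp

instance : FiniteDimensional K (bidegreeLT K M N) :=
  have := Finite.of_equiv _ (bidegreeLTEquiv M N).symm
  (basisRestrictSupport K {d : Fin 2 →₀ ℕ | d 0 < M ∧ d 1 < N}).finiteDimensional_of_finite

lemma finrank_bidegreeLT : Module.finrank K (bidegreeLT K M N) = M * N := by
  rw [bidegreeLT, Module.finrank_eq_nat_card_basis (basisRestrictSupport K _),
    Nat.card_congr (bidegreeLTEquiv M N)]
  simp

end Bidegree

section Colength

/-- The exponents of degree less than `k` in two variables form a triangle. -/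
def degreeLTEquiv (k : ℕ) : {d : Fin 2 →₀ ℕ // d.degree < k} ≃ (i : Fin k) × Fin (i.1 + 1) where
  toFun d := ⟨⟨d.1.degree, d.2⟩, ⟨d.1 0, by simp [Finsupp.degree_eq_sum]⟩⟩
  invFun x := ⟨Finsupp.single 0 x.2.1 + Finsupp.single 1 (x.1.1 - x.2.1), by
    rw [map_add, Finsupp.degree_single, Finsupp.degree_single]; omega⟩
  left_inv d := by ext i; fin_cases i <;> simp [Finsupp.degree_eq_sum]
  right_inv := fun ⟨i, j⟩ ↦ by
    have hi : (Finsupp.single (0 : Fin 2) j.1 + Finsupp.single 1 (i.1 - j.1)).degree = i.1 := by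
      rw [map_add, Finsupp.degree_single, Finsupp.degree_single]
      omega
    refine Sigma.ext (Fin.ext hi) ((Fin.heq_ext_iff (congrArg (· + 1) hi)).mpr ?_)
    simp

lemma natCard_degree_lt (k : ℕ) :
    Nat.card {d : Fin 2 →₀ ℕ // d.degree < k} = (k + 1).choose 2 := by
  rw [Nat.card_congr (degreeLTEquiv k), Nat.card_sigma]
  simp only [Nat.card_fin]
  rw [Fin.sum_univ_eq_sum_range (· + 1) k, Nat.choose_two_right, ← Finset.sum_range_id,
    Finset.sum_range_succ']
  simp

lemma finrank_map_add_finrank_inf_ker {K V W : Type*} [Field K] [AddCommGroup V] [Module K V]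
    [AddCommGroup W] [Module K W] (T : V →ₗ[K] W) (U : Submodule K V) [FiniteDimensional K U] :
    Module.finrank K (U.map T) + Module.finrank K ↥(U ⊓ LinearMap.ker T) =
      Module.finrank K U := by
  rw [← (T.domRestrict U).finrank_range_add_finrank_ker, LinearMap.range_domRestrict,
    LinearMap.ker_domRestrict, ← Submodule.finrank_map_subtype_eq, Submodule.map_comap_subtype]

variable {K : Type*} [Field K] (S : Finset (Fin 2 → K)) (μ : (Fin 2 → K) → ℕ)

/-- The polynomials in `bidegreeLT K M N` lying in the fat point ideal `fatPointIdeal S μ`. -/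
def fatPointSystem (M N : ℕ) : Submodule K (MvPolynomial (Fin 2) K) :=
  bidegreeLT K M N ⊓ (fatPointIdeal S μ).restrictScalars K

instance (M N : ℕ) : FiniteDimensional K (fatPointSystem S μ M N) :=
  Submodule.finiteDimensional_inf_left _ _

lemma finrank_jets_codomain :
    Module.finrank K ((P : S) → {d : Fin 2 →₀ ℕ // d.degree < μ P} → K) =
      ∑ P ∈ S, (μ P + 1).choose 2 := by
  have (P : S) : Fintype {d : Fin 2 →₀ ℕ // d.degree < μ P} := Fintype.ofFinite _
  simp only [Module.finrank_pi_fintype, Module.finrank_self, Finset.sum_const, smul_eq_mul,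
    mul_one, Finset.card_univ, ← Nat.card_eq_fintype_card, natCard_degree_lt]
  exact Finset.sum_coe_sort S fun P ↦ (μ P + 1).choose 2

lemma mul_le_finrank_fatPointSystem_add (M N : ℕ) :
    M * N ≤ Module.finrank K (fatPointSystem S μ M N) + ∑ P ∈ S, (μ P + 1).choose 2 := by
  have hrank := finrank_map_add_finrank_inf_ker (jets S μ) (bidegreeLT K M N)
  have hle := Submodule.finrank_le ((bidegreeLT K M N).map (jets S μ))
  rw [finrank_jets_codomain] at hle
  rw [ker_jets, finrank_bidegreeLT] at hrank
  rw [fatPointSystem]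
  omega

lemma eventually_map_jets_bidegreeLT_eq_top :
    ∀ᶠ n in Filter.atTop, (bidegreeLT K n n).map (jets S μ) = ⊤ := by
  let V : ℕ →o Submodule K _ :=
    ⟨fun n ↦ (bidegreeLT K n n).map (jets S μ),
      fun _ _ h ↦ Submodule.map_mono (bidegreeLT_mono h h)⟩
  obtain ⟨n₀, hn₀⟩ := WellFoundedGT.monotone_chain_condition V
  have htop : V n₀ = ⊤ := by
    refine eq_top_iff.mpr fun c _ ↦ ?_
    obtain ⟨f, rfl⟩ := jets_surjective c
    obtain ⟨N, hN⟩ := exists_mem_bidegreeLT f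
    rw [hn₀ (max n₀ N) (le_max_left _ _)]
    exact V.monotone (le_max_right _ _) (Submodule.mem_map_of_mem hN)
  filter_upwards [Filter.eventually_ge_atTop n₀] with n hn
  exact (hn₀ n hn).symm.trans htop

lemma eventually_finrank_fatPointSystem_add_eq :
    ∀ᶠ n in Filter.atTop,
      Module.finrank K (fatPointSystem S μ n n) + ∑ P ∈ S, (μ P + 1).choose 2 = n * n := by
  filter_upwards [eventually_map_jets_bidegreeLT_eq_top S μ] with n hn
  have hrank := finrank_map_add_finrank_inf_ker (jets S μ) (bidegreeLT K n n)
  rw [hn, finrank_top, finrank_jets_codomain, ker_jets, finrank_bidegreeLT] at hrank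
  rw [fatPointSystem]
  omega

end Colength

section Bezout

variable {K : Type*} [Field K] {S : Finset (Fin 2 → K)} {μ ν : (Fin 2 → K) → ℕ}
  {g h : MvPolynomial (Fin 2) K}

lemma finrank_map_mulLeft {A : Type*} [CommRing A] [IsDomain A] [Algebra K A] {a : A}
    (ha : a ≠ 0) (U : Submodule K A) :
    Module.finrank K (U.map (LinearMap.mulLeft K a)) = Module.finrank K U :=
  (Submodule.equivMapOfInjective _ (fun _ _ h ↦ mul_left_cancel₀ ha h) U).finrank_eq.symm

lemma map_mulLeft_fatPointSystem_le (hg : g ∈ fatPointIdeal S μ) (M N : ℕ) :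
    (fatPointSystem S ν (M - degreeOf 0 g) (N - degreeOf 1 g)).map (LinearMap.mulLeft K g) ≤
      fatPointSystem S (μ + ν) M N := by
  rintro _ ⟨f, ⟨hf, hfν⟩, rfl⟩
  exact ⟨mul_mem_bidegreeLT hf, mul_mem_fatPointIdeal_add hg hfν⟩

lemma map_mulLeft_inf_map_mulLeft_le (hh : h ≠ 0) (hgh : IsRelPrime g h)
    {M N M' N' : ℕ} :
    (bidegreeLT K M N).map (LinearMap.mulLeft K g) ⊓
        (bidegreeLT K M' N').map (LinearMap.mulLeft K h) ≤
      (bidegreeLT K (M - degreeOf 0 h) (N - degreeOf 1 h)).map (LinearMap.mulLeft K (g * h)) := by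
  rintro F ⟨⟨a, ha, rfl⟩, ⟨b, -, hb⟩⟩
  obtain ⟨e, rfl⟩ : h ∣ a := hgh.symm.dvd_of_dvd_mul_left ⟨b, hb.symm⟩
  refine ⟨e, ?_, mul_assoc g h e⟩
  rcases eq_or_ne e 0 with rfl | he
  · exact zero_mem _
  rw [SetLike.mem_coe, mem_bidegreeLT_iff_degreeOf (mul_ne_zero hh he), degreeOf_mul_eq hh he,
    degreeOf_mul_eq hh he] at ha
  rw [SetLike.mem_coe, mem_bidegreeLT_iff_degreeOf he]
  omega

lemma choose_two_add_succ (m n : ℕ) :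
    (m + n + 1).choose 2 = (m + 1).choose 2 + (n + 1).choose 2 + m * n := by
  induction n with
  | zero => simp
  | succ n ih =>
    rw [← add_assoc m n 1, Nat.choose_succ_succ', Nat.choose_one_right, ih,
      Nat.choose_succ_succ' (n + 1), Nat.choose_one_right]
    ring

theorem sum_mul_le_of_isRelPrime (hg : g ≠ 0) (hh : h ≠ 0) (hgh : IsRelPrime g h)
    (hgμ : g ∈ fatPointIdeal S μ) (hhν : h ∈ fatPointIdeal S ν) :
    ∑ P ∈ S, μ P * ν P ≤ degreeOf 0 g * degreeOf 1 h + degreeOf 1 g * degreeOf 0 h := by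
  set a := degreeOf 0 g
  set b := degreeOf 1 g
  set c := degreeOf 0 h
  set d := degreeOf 1 h
  obtain ⟨n, hn, hnabcd⟩ := ((eventually_finrank_fatPointSystem_add_eq S (μ + ν)).and
    (Filter.eventually_ge_atTop (a + b + c + d))).exists
  let U := (fatPointSystem S ν (n - a) (n - b)).map (LinearMap.mulLeft K g)
  let V := (fatPointSystem S μ (n - c) (n - d)).map (LinearMap.mulLeft K h)
  have hU : (n - a) * (n - b) ≤ Module.finrank K U + ∑ P ∈ S, (ν P + 1).choose 2 :=
    (finrank_map_mulLeft (K := K) hg _).symm ▸ mul_le_finrank_fatPointSystem_add S ν _ _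
  have hV : (n - c) * (n - d) ≤ Module.finrank K V + ∑ P ∈ S, (μ P + 1).choose 2 :=
    (finrank_map_mulLeft (K := K) hh _).symm ▸ mul_le_finrank_fatPointSystem_add S μ _ _
  have hsup : Module.finrank K ↥(U ⊔ V) ≤ Module.finrank K (fatPointSystem S (μ + ν) n n) :=
    Submodule.finrank_mono (sup_le (map_mulLeft_fatPointSystem_le hgμ n n)
      (add_comm ν μ ▸ map_mulLeft_fatPointSystem_le hhν n n))
  have hinf : Module.finrank K ↥(U ⊓ V) ≤ (n - a - c) * (n - b - d) := by
    rw [← finrank_bidegreeLT (K := K),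
      ← finrank_map_mulLeft (mul_ne_zero hg hh) (bidegreeLT K _ _)]
    exact Submodule.finrank_mono ((inf_le_inf (Submodule.map_mono inf_le_left)
      (Submodule.map_mono inf_le_left)).trans (map_mulLeft_inf_map_mulLeft_le hh hgh))
  have hdim := Submodule.finrank_sup_add_finrank_inf_eq U V
  simp only [Pi.add_apply, choose_two_add_succ, Finset.sum_add_distrib] at hn
  have hexpand : (n - a) * (n - b) + (n - c) * (n - d) + (a * d + b * c) =
      n * n + (n - a - c) * (n - b - d) := by
    zify [show a ≤ n by omega, show b ≤ n by omega, show c ≤ n by omega, show d ≤ n by omega,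
      show c ≤ n - a by omega, show d ≤ n - b by omega]
    ring
  omega

end Bezout

section Adjoint

section Derivative

variable {σ R : Type*} [CommSemiring R]

lemma degreeOf_pderiv_le (i j : σ) (f : MvPolynomial σ R) :
    degreeOf j (pderiv i f) ≤ degreeOf j f - Finsupp.single i 1 j := by
  rw [degreeOf_le_iff]
  intro d hd
  rw [mem_support_iff, coeff_pderiv] at hd
  have := monomial_le_degreeOf j (mem_support_iff.mpr (left_ne_zero_of_mul hd))
  rw [Finsupp.add_apply] at this
  omega

lemma pderiv_ne_zero [NoZeroDivisors R] [CharZero R] {i : σ} {f : MvPolynomial σ R}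
    (h : degreeOf i f ≠ 0) : pderiv i f ≠ 0 := by
  obtain ⟨d, hd, hdi⟩ : ∃ d ∈ f.support, 1 ≤ d i := by
    simpa [Nat.one_le_iff_ne_zero] using
      (degreeOf_lt_iff (f := f) (n := i) one_pos).not.mp (by simpa using h)
  intro h0
  have hcoeff := coeff_pderiv (i := i) f (d - Finsupp.single i 1)
  rw [h0, coeff_zero, tsub_add_cancel_of_le (by simpa using hdi), eq_comm] at hcoeff
  exact (mul_ne_zero (mem_support_iff.mp hd) (Nat.cast_add_one_ne_zero _)) hcoeff

lemma not_dvd_pderiv {R : Type*} [CommRing R] [IsDomain R] [CharZero R] {i : σ}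
    {g : MvPolynomial σ R} (hi : degreeOf i g ≠ 0) : ¬ g ∣ pderiv i g := by
  have hne := pderiv_ne_zero hi
  have hdeg := degreeOf_pderiv_le i i g
  rintro ⟨q, hq⟩
  have hq0 := right_ne_zero_of_mul (hq ▸ hne)
  rw [hq, degreeOf_mul_eq (left_ne_zero_of_mul (hq ▸ hne)) hq0, Finsupp.single_eq_same] at hdeg
  omega

end Derivative

variable {K : Type*} [Field K] [CharZero K] {S : Finset (Fin 2 → K)} {μ : (Fin 2 → K) → ℕ}
  {g : MvPolynomial (Fin 2) K}

lemma two_mul_choose_two_succ (k : ℕ) : 2 * (k - 1 + 1).choose 2 = k * (k - 1) := by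
  cases k with
  | zero => simp
  | succ k =>
    rw [Nat.choose_two_right, Nat.mul_div_cancel' (Nat.even_mul_pred_self _).two_dvd]
    simp

lemma sum_choose_two_lt_of_irreducible (hg : Irreducible g) (h0 : degreeOf 0 g ≠ 0)
    (h1 : degreeOf 1 g ≠ 0) (hgμ : g ∈ fatPointIdeal S μ) :
    ∑ P ∈ S, (μ P - 1 + 1).choose 2 < degreeOf 0 g * degreeOf 1 g := by
  have hbezout := sum_mul_le_of_isRelPrime hg.ne_zero (pderiv_ne_zero h0)
    (hg.isRelPrime_iff_not_dvd.mpr (not_dvd_pderiv h0)) hgμ (pderiv_mem_fatPointIdeal 0 hgμ)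
  have hdeg0 := degreeOf_pderiv_le 0 0 g
  have hdeg1 := degreeOf_pderiv_le 0 1 g
  simp only [← two_mul_choose_two_succ, ← Finset.mul_sum] at hbezout
  rw [Finsupp.single_eq_same] at hdeg0
  have hlt : degreeOf 1 g * degreeOf 0 (pderiv 0 g) < degreeOf 1 g * degreeOf 0 g :=
    Nat.mul_lt_mul_of_pos_left (by omega) (by omega)
  have hle : degreeOf 0 g * degreeOf 1 (pderiv 0 g) ≤ degreeOf 0 g * degreeOf 1 g :=
    Nat.mul_le_mul_left _ (hdeg1.trans (Nat.sub_le _ _))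
  rw [mul_comm (degreeOf 1 g) (degreeOf 0 g)] at hlt
  omega

lemma exists_adjoint (hg : Irreducible g) (h0 : degreeOf 0 g ≠ 0) (h1 : degreeOf 1 g ≠ 0)
    (hgμ : g ∈ fatPointIdeal S μ) :
    ∃ a ≠ 0, a ∈ fatPointIdeal S (fun P ↦ μ P - 1) ∧
      degreeOf 0 a < degreeOf 0 g ∧ degreeOf 1 a < degreeOf 1 g := by
  have hlt := sum_choose_two_lt_of_irreducible hg h0 h1 hgμ
  have hdim := mul_le_finrank_fatPointSystem_add S (fun P ↦ μ P - 1) (degreeOf 0 g) (degreeOf 1 g)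
  have hpos : fatPointSystem S (fun P ↦ μ P - 1) (degreeOf 0 g) (degreeOf 1 g) ≠ ⊥ := by
    intro h
    rw [h, finrank_bot] at hdim
    omega
  obtain ⟨a, ⟨ha, haμ⟩, ha0⟩ := Submodule.exists_mem_ne_zero_of_ne_bot hpos
  exact ⟨a, ha0, haμ, (mem_bidegreeLT_iff_degreeOf ha0).mp ha⟩

lemma exists_degreeOf_lt_of_irreducible_dvd {m : ℕ} {f : MvPolynomial (Fin 2) K} (hf0 : f ≠ 0)
    (hf : f ∈ fatPointIdeal S fun _ ↦ m + 1) (hg : Irreducible g) (hgf : g ∣ f)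
    (h0 : degreeOf 0 g ≠ 0) (h1 : degreeOf 1 g ≠ 0) :
    ∃ f' ≠ 0, f' ∈ fatPointIdeal S (fun _ ↦ m) ∧
      degreeOf 0 f' < degreeOf 0 f ∧ degreeOf 1 f' < degreeOf 1 f := by
  obtain ⟨q, rfl⟩ := hgf
  have hq := right_ne_zero_of_mul hf0
  have hord (P : Fin 2 → K) : ((ordAt P g).toNat : ℕ∞) = ordAt P g :=
    ENat.natCast_toNat (ordAt_ne_top hg.ne_zero)
  obtain ⟨a, ha, haμ, ha0, ha1⟩ := exists_adjoint (S := S) hg h0 h1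
    (mem_fatPointIdeal.mpr fun P _ ↦ (hord P).le)
  refine ⟨a * q, mul_ne_zero ha hq, mem_fatPointIdeal.mpr fun P hP ↦ ?_, ?_⟩
  · have hfP := mem_fatPointIdeal.mp hf P hP
    have haP := mem_fatPointIdeal.mp haμ P hP
    rw [ordAt_mul] at hfP ⊢
    obtain ⟨k, hk⟩ := ENat.ne_top_iff_exists.mp (ordAt_ne_top (P := P) hq)
    rw [← hord P, ← hk] at hfP
    rw [← hk]
    refine le_trans ?_ (add_le_add_left haP _)
    norm_cast at hfP ⊢
    omega
  · rw [degreeOf_mul_eq ha hq, degreeOf_mul_eq ha hq, degreeOf_mul_eq hg.ne_zero hq,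
      degreeOf_mul_eq hg.ne_zero hq]
    omega

end Adjoint

section Univariate

variable {σ K : Type*} [Field K]

lemma exists_toMvPolynomial_eq {i : σ} {f : MvPolynomial σ K}
    (hf : ∀ j ≠ i, degreeOf j f = 0) : ∃ u : Polynomial K, u.toMvPolynomial i = f := by
  classical
  have hvars : f ∈ supported K {i} := by
    rw [mem_supported]
    intro j hj
    by_contra hji
    exact mem_vars_iff_degreeOf_ne_zero.mp hj (hf j hji)
  rwa [supported_eq_adjoin_X, Set.image_singleton,
    Algebra.adjoin_singleton_eq_range_aeval] at hvars

lemma ordAt_X_sub_C (P : σ → K) (i : σ) : ordAt P (X i - C (P i)) = 1 := by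
  simp [ordAt, coe_X, MvPowerSeries.X, MvPowerSeries.order_monomial_of_ne_zero]

lemma ordAt_toMvPolynomial (P : σ → K) (i : σ) {u : Polynomial K} (hu : u ≠ 0) :
    ordAt P (u.toMvPolynomial i) = u.rootMultiplicity (P i) := by
  obtain ⟨q, hq, hndvd⟩ := u.exists_eq_pow_rootMultiplicity_mul_and_not_dvd hu (P i)
  have hordq : ordAt P (q.toMvPolynomial i) = 0 := by
    rwa [ordAt_eq_zero_iff, eval_toMvPolynomial, ne_eq, ← Polynomial.IsRoot.def,
      ← Polynomial.dvd_iff_isRoot]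
  conv_lhs => rw [hq]
  simp [ordAt_mul, ordAt_pow, ordAt_X_sub_C, hordq]

lemma degreeOf_X_sub_C (i : σ) (a : K) : degreeOf i (X i - C a) = 1 := by
  rw [sub_eq_add_neg, ← C_neg, degreeOf_add_eq_of_degreeOf_lt] <;> simp

lemma X_sub_C_ne_zero (i : σ) (a : K) : (X i - C a : MvPolynomial σ K) ≠ 0 := fun h ↦ by
  simpa [h] using degreeOf_X_sub_C i a

lemma degreeOf_add_card_le_of_dvd {i : σ} {A : Finset K} {f g : MvPolynomial σ K} (hf : f ≠ 0)
    (hgf : (∏ a ∈ A, (Polynomial.X - Polynomial.C a)).toMvPolynomial i * g ∣ f) :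
    degreeOf i g + A.card ≤ degreeOf i f := by
  obtain ⟨q, rfl⟩ := hgf
  have hne := left_ne_zero_of_mul hf
  rw [degreeOf_mul_eq hne (right_ne_zero_of_mul hf),
    degreeOf_mul_eq (left_ne_zero_of_mul hne) (right_ne_zero_of_mul hne), map_prod]
  have hprod : degreeOf i (∏ a ∈ A, (X i - C a)) = A.card := by
    simp [degreeOf_prod_eq, X_sub_C_ne_zero, degreeOf_X_sub_C]
  simp only [map_sub, Polynomial.toMvPolynomial_X, Polynomial.toMvPolynomial_C, hprod]
  omega

lemma exists_eq_prod_X_sub_C_mul [DecidableEq K] {u : Polynomial K} (hu : u ≠ 0) {A : Finset K}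
    (hA : A ⊆ u.roots.toFinset) :
    ∃ v, u = (∏ a ∈ A, (Polynomial.X - Polynomial.C a)) * v ∧
      ∀ s, u.rootMultiplicity s = (if s ∈ A then 1 else 0) + v.rootMultiplicity s := by
  obtain ⟨v, rfl⟩ : (∏ a ∈ A, (Polynomial.X - Polynomial.C a)) ∣ u :=
    (Multiset.prod_X_sub_C_dvd_iff_le_roots hu A.val).mpr
      ((Multiset.le_iff_subset A.nodup).mpr fun a ha ↦ Multiset.mem_toFinset.mp (hA ha))
  refine ⟨v, rfl, fun s ↦ ?_⟩
  rw [Polynomial.rootMultiplicity_mul hu, ← Polynomial.count_roots,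
    Polynomial.roots_prod_X_sub_C, Multiset.count_eq_of_nodup A.nodup]
  rfl

end Univariate

section Separated

variable {K : Type*} [Field K] {S : Finset (Fin 2 → K)} {m : ℕ} {f : MvPolynomial (Fin 2) K}

lemma exists_eq_toMvPolynomial_mul (hf0 : f ≠ 0)
    (hf : ∀ g, Irreducible g → g ∣ f → degreeOf 0 g = 0 ∨ degreeOf 1 g = 0) :
    ∃ u w : Polynomial K, f = u.toMvPolynomial 0 * w.toMvPolynomial 1 := by
  induction f using UniqueFactorizationMonoid.induction_on_prime with
  | h₁ => exact absurd rfl hf0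
  | h₂ x hx =>
    obtain ⟨r, -, rfl⟩ := isUnit_iff_eq_C_of_isReduced.mp hx
    exact ⟨Polynomial.C r, 1, by simp⟩
  | h₃ q p hq hp ih =>
    obtain ⟨u, w, rfl⟩ := ih hq fun g hg hgq ↦ hf g hg (hgq.mul_left p)
    rcases hf p hp.irreducible (dvd_mul_right p _) with h | h
    · obtain ⟨t, rfl⟩ := exists_toMvPolynomial_eq (i := 1) (f := p) (by simpa [Fin.forall_fin_two])
      exact ⟨u, t * w, by rw [map_mul]; ring⟩
    · obtain ⟨t, rfl⟩ := exists_toMvPolynomial_eq (i := 0) (f := p) (by simpa [Fin.forall_fin_two])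
      exact ⟨t * u, w, by rw [map_mul]; ring⟩

lemma toMvPolynomial_mul_mem_fatPointIdeal {u w : Polynomial K} (hu : u ≠ 0) (hw : w ≠ 0) :
    u.toMvPolynomial 0 * w.toMvPolynomial 1 ∈ fatPointIdeal S (fun _ ↦ m) ↔
      ∀ P ∈ S, m ≤ u.rootMultiplicity (P 0) + w.rootMultiplicity (P 1) := by
  simp only [mem_fatPointIdeal, ordAt_mul, ordAt_toMvPolynomial _ _ hu, ordAt_toMvPolynomial _ _ hw]
  norm_cast

lemma exists_lines_covering {u w : Polynomial K} (hf : f = u.toMvPolynomial 0 * w.toMvPolynomial 1)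
    (hf0 : f ≠ 0) (hfS : f ∈ fatPointIdeal S fun _ ↦ m + 1) :
    ∃ A B : Finset K, (∀ P ∈ S, P 0 ∈ A ∨ P 1 ∈ B) ∧
      ∃ f' ≠ 0, f' ∈ fatPointIdeal S (fun _ ↦ m) ∧
        degreeOf 0 f' + A.card ≤ degreeOf 0 f ∧ degreeOf 1 f' + B.card ≤ degreeOf 1 f := by
  classical
  have hu : u ≠ 0 := by rintro rfl; simp [hf] at hf0
  have hw : w ≠ 0 := by rintro rfl; simp [hf] at hf0
  rw [hf, toMvPolynomial_mul_mem_fatPointIdeal hu hw] at hfS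
  let A := u.roots.toFinset
  let B := {t ∈ w.roots.toFinset | m + 1 ≤ w.rootMultiplicity t}
  have hA (s : K) : s ∈ A ↔ 0 < u.rootMultiplicity s := by
    rw [Multiset.mem_toFinset, ← Polynomial.count_roots, Multiset.count_pos]
  have hB (t : K) : t ∈ B ↔ m + 1 ≤ w.rootMultiplicity t := by
    rw [Finset.mem_filter, Multiset.mem_toFinset, ← Multiset.count_pos, Polynomial.count_roots]
    omega
  obtain ⟨u', hu', hmultu⟩ := exists_eq_prod_X_sub_C_mul hu (subset_refl A)
  obtain ⟨w', hw', hmultw⟩ := exists_eq_prod_X_sub_C_mul hw (Finset.filter_subset _ _ : B ⊆ _)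
  let a : MvPolynomial (Fin 2) K :=
    (∏ s ∈ A, (Polynomial.X - Polynomial.C s)).toMvPolynomial 0
  let b : MvPolynomial (Fin 2) K :=
    (∏ t ∈ B, (Polynomial.X - Polynomial.C t)).toMvPolynomial 1
  have hfac : f = a * b * (u'.toMvPolynomial 0 * w'.toMvPolynomial 1) := by
    conv_lhs => rw [hf, hu', hw', map_mul, map_mul, mul_mul_mul_comm]
  refine ⟨A, B, fun P hP ↦ ?_, _, right_ne_zero_of_mul (hfac ▸ hf0),
    (toMvPolynomial_mul_mem_fatPointIdeal (right_ne_zero_of_mul (hu' ▸ hu))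
      (right_ne_zero_of_mul (hw' ▸ hw))).mpr fun P hP ↦ ?_,
    degreeOf_add_card_le_of_dvd hf0 ⟨b, by rw [hfac]; ring⟩,
    degreeOf_add_card_le_of_dvd hf0 ⟨a, by rw [hfac]; ring⟩⟩
  · have := hfS P hP
    rw [hA, hB]
    omega
  · have := hfS P hP
    have := hmultu (P 0)
    have := hmultw (P 1)
    grind

end Separated

section Affine

lemma exists_const_of_forall_mem_of_card_le_one {ι α : Type*} [Nonempty α] {s : Finset ι}
    {A : Finset α} {x : ι → α} (hA : A.card ≤ 1) (hx : ∀ i ∈ s, x i ∈ A) :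
    ∃ a, ∀ i ∈ s, x i = a := by
  obtain ⟨a, ha⟩ := Finset.card_le_one_iff_subset_singleton.mp hA
  exact ⟨a, fun i hi ↦ Finset.mem_singleton.mp (ha (hx i hi))⟩

variable {K : Type*} [Field K] {S : Finset (Fin 2 → K)} {m : ℕ} {f : MvPolynomial (Fin 2) K}

lemma exists_fiber_or_exists_degreeOf_add_two_le [CharZero K] (hf0 : f ≠ 0)
    (hf : f ∈ fatPointIdeal S fun _ ↦ m + 1) :
    ((∃ a, ∀ P ∈ S, P 0 = a) ∨ ∃ b, ∀ P ∈ S, P 1 = b) ∨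
      ∃ f' ≠ 0, f' ∈ fatPointIdeal S (fun _ ↦ m) ∧
        degreeOf 0 f' + degreeOf 1 f' + 2 ≤ degreeOf 0 f + degreeOf 1 f := by
  by_cases hmixed : ∃ g, Irreducible g ∧ g ∣ f ∧ degreeOf 0 g ≠ 0 ∧ degreeOf 1 g ≠ 0
  · obtain ⟨g, hg, hgf, hg0, hg1⟩ := hmixed
    obtain ⟨f', hf'0, hf', hlt0, hlt1⟩ :=
      exists_degreeOf_lt_of_irreducible_dvd hf0 hf hg hgf hg0 hg1
    exact .inr ⟨f', hf'0, hf', by omega⟩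
  obtain ⟨u, w, huw⟩ := exists_eq_toMvPolynomial_mul hf0 fun g hg hgf ↦ by
    by_contra! h
    exact hmixed ⟨g, hg, hgf, h⟩
  obtain ⟨A, B, hcover, f', hf'0, hf', hle0, hle1⟩ := exists_lines_covering huw hf0 hf
  rcases Nat.lt_or_ge (A.card + B.card) 2 with hcard | hcard
  · left
    rcases Nat.eq_zero_or_pos A.card with hA | hA
    · rw [Finset.card_eq_zero] at hA
      exact .inr <| exists_const_of_forall_mem_of_card_le_one (by omega)
        fun P hP ↦ (hcover P hP).resolve_left (by simp [hA])
    · have hB : B = ∅ := Finset.card_eq_zero.mp (by omega)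
      exact .inl <| exists_const_of_forall_mem_of_card_le_one (by omega)
        fun P hP ↦ (hcover P hP).resolve_right (by simp [hB])
  · exact .inr ⟨f', hf'0, hf', by omega⟩

end Affine

section Substitution

variable {σ τ R : Type*} [CommRing R] {f : MvPolynomial σ R}

lemma degreeOf_aeval_le {g : σ → MvPolynomial τ R} {j : τ} {n : ℕ}
    (h : ∀ d ∈ f.support, (d.sum fun i k ↦ k * degreeOf j (g i)) ≤ n) :
    degreeOf j (aeval g f) ≤ n := by
  rw [aeval_def, eval₂_eq]
  refine (degreeOf_sum_le _ _ _).trans (Finset.sup_le fun d hd ↦ ?_)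
  rw [algebraMap_eq]
  exact (degreeOf_C_mul_le _ _ _).trans <| (degreeOf_prod_le _ _ _).trans <|
    (Finset.sum_le_sum fun i _ ↦ degreeOf_pow_le _ _ _).trans (h d hd)

lemma degreeOf_translateAt_le [Nontrivial R] (P : σ → R) (i : σ) (f : MvPolynomial σ R) :
    degreeOf i (translateAt P f) ≤ degreeOf i f := by
  classical
  refine degreeOf_aeval_le fun d hd ↦ ?_
  have hX (j : σ) : degreeOf i (X j + C (P j)) ≤ if i = j then 1 else 0 :=
    (degreeOf_add_le _ _ _).trans (by simp [degreeOf_X])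
  calc d.sum (fun j k ↦ k * degreeOf i (X j + C (P j)))
      ≤ d.sum fun j k ↦ k * if i = j then 1 else 0 :=
        Finset.sum_le_sum fun j _ ↦ Nat.mul_le_mul_left _ (hX j)
    _ = d i := by simp only [mul_ite, mul_one, mul_zero, Finsupp.sum_ite_self_eq]
    _ ≤ degreeOf i f := monomial_le_degreeOf i hd

lemma sum_coeff_translateAt_mul_prod [Fintype σ] (P : σ → R) (f : MvPolynomial σ R) :
    ∑ d ∈ (translateAt P f).support, C (coeff d (translateAt P f)) * ∏ i, (X i - C (P i)) ^ d i =
      f := by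
  conv_rhs => rw [← (translateAt P).symm_apply_apply f]
  exact (eval₂_eq' _ _ _).symm

end Substitution

section Chart

/-- The index in `R4` of the `j`-th homogeneous coordinate on the `i`-th factor of `ℙ¹ × ℙ¹`. -/
def lineVar (i j : Fin 2) : Fin 2 ⊕ Fin 2 := ![Sum.inl j, Sum.inr j] i

/-- The linear form on the `i`-th factor whose nonvanishing defines the affine chart of
parameter `t`. Varying `t` lets one chart contain any finite set of points. -/
def chartForm (t : ℂ) (i : Fin 2) : R4 := X (lineVar i 0) - C t * X (lineVar i 1)

/-- The linear form on the `i`-th factor vanishing at the point of affine coordinate `c`. -/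
def coordForm (t c : ℂ) (i : Fin 2) : R4 := X (lineVar i 1) - C c * chartForm t i

/-- Restriction to the chart `chartForm t 0 = chartForm t 1 = 1`, on which the affine coordinates
are `x₁` and `y₁`. -/
def dehomogenize (t : ℂ) : R4 →ₐ[ℂ] MvPolynomial (Fin 2) ℂ :=
  aeval (Sum.elim ![1 + C t * X 0, X 0] ![1 + C t * X 1, X 1])

@[simp]
lemma dehomogenize_chartForm (t : ℂ) (i : Fin 2) : dehomogenize t (chartForm t i) = 1 := by
  fin_cases i <;> simp [dehomogenize, chartForm, lineVar, algHom_C]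

@[simp]
lemma dehomogenize_coordForm (t c : ℂ) (i : Fin 2) :
    dehomogenize t (coordForm t c i) = X i - C c := by
  rw [coordForm, map_sub, map_mul, dehomogenize_chartForm]
  fin_cases i <;> simp [dehomogenize, lineVar, algHom_C]

lemma isWeightedHomogeneous_chartForm (t : ℂ) (i : Fin 2) :
    IsWeightedHomogeneous biWeight (chartForm t i) (biWeight (lineVar i 0)) := by
  have h : biWeight (lineVar i 1) = biWeight (lineVar i 0) := by fin_cases i <;> rfl
  exact (isWeightedHomogeneous_X ℂ biWeight _).sub (h ▸ (isWeightedHomogeneous_X ℂ _ _).C_mul t)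

lemma isWeightedHomogeneous_coordForm (t c : ℂ) (i : Fin 2) :
    IsWeightedHomogeneous biWeight (coordForm t c i) (biWeight (lineVar i 0)) := by
  have h : biWeight (lineVar i 1) = biWeight (lineVar i 0) := by fin_cases i <;> rfl
  exact (h ▸ isWeightedHomogeneous_X ℂ biWeight (lineVar i 1)).sub
    ((isWeightedHomogeneous_chartForm t i).C_mul c)

end Chart

section BiForm

variable {F G : R4} {p q : ℕ}

lemma IsBiForm.add_eq_of_mem_support (hF : IsBiForm F p q) {d : Fin 2 ⊕ Fin 2 →₀ ℕ}
    (hd : d ∈ F.support) :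
    d (Sum.inl 0) + d (Sum.inl 1) = p ∧ d (Sum.inr 0) + d (Sum.inr 1) = q := by
  have := hF (mem_support_iff.mp hd)
  simpa [Finsupp.weight_apply, Finsupp.sum_fintype, biWeight, -nsmul_eq_mul] using this

lemma IsBiForm.eval_mul_mul (hF : IsBiForm F p q) (a b : ℂ) (z : Fin 2 ⊕ Fin 2 → ℂ) :
    eval (Sum.elim (fun j ↦ a * z (Sum.inl j)) fun j ↦ b * z (Sum.inr j)) F =
      a ^ p * b ^ q * eval z F := by
  rw [eval_eq', eval_eq', Finset.mul_sum]
  refine Finset.sum_congr rfl fun d hd ↦ ?_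
  obtain ⟨rfl, rfl⟩ := hF.add_eq_of_mem_support hd
  simp only [Fintype.prod_sum_type, Fin.prod_univ_two, Sum.elim_inl, Sum.elim_inr]
  ring

lemma eval_dehomogenize (t : ℂ) (F : R4) (x : Fin 2 → ℂ) :
    eval x (dehomogenize t F) =
      eval (Sum.elim ![1 + t * x 0, x 0] ![1 + t * x 1, x 1]) F := by
  induction F using MvPolynomial.induction_on with
  | C a => simp [algHom_C]
  | add F G hF hG => simp [hF, hG]
  | mul_X F k hF =>
    rw [map_mul, map_mul, map_mul, hF]
    rcases k with k | k <;> fin_cases k <;> simp [dehomogenize]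

lemma IsBiForm.eval_eq_mul_eval_dehomogenize (hF : IsBiForm F p q) {t : ℂ}
    {z : Fin 2 ⊕ Fin 2 → ℂ} (hz : ∀ i, eval z (chartForm t i) ≠ 0) :
    eval z F = eval z (chartForm t 0) ^ p * eval z (chartForm t 1) ^ q *
      eval (fun i ↦ z (lineVar i 1) / eval z (chartForm t i)) (dehomogenize t F) := by
  rw [eval_dehomogenize, ← hF.eval_mul_mul]
  have h0 : z (Sum.inl 0) - t * z (Sum.inl 1) ≠ 0 := by simpa [chartForm, lineVar] using hz 0
  have h1 : z (Sum.inr 0) - t * z (Sum.inr 1) ≠ 0 := by simpa [chartForm, lineVar] using hz 1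
  congr 2
  funext k
  rcases k with k | k <;> fin_cases k <;>
    simp [chartForm, lineVar, mul_add, mul_left_comm, mul_div_cancel₀, h0, h1]

lemma IsBiForm.eq_zero_of_dehomogenize_eq_zero (hF : IsBiForm F p q) {t : ℂ}
    (h : dehomogenize t F = 0) : F = 0 := by
  have hchart (i : Fin 2) : chartForm t i ≠ 0 := fun h0 ↦ by
    simpa [h0] using dehomogenize_chartForm t i
  suffices F * ∏ i, chartForm t i = 0 from
    (mul_eq_zero.mp this).resolve_right (Finset.prod_ne_zero_iff.mpr fun i _ ↦ hchart i)
  refine MvPolynomial.funext fun z ↦ ?_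
  by_cases hz : ∀ i, eval z (chartForm t i) ≠ 0
  · simp [hF.eval_eq_mul_eval_dehomogenize hz, h]
  · obtain ⟨i, hi⟩ := not_forall_not.mp hz
    rw [map_mul, map_prod, Finset.prod_eq_zero (Finset.mem_univ i) hi, mul_zero, map_zero]

lemma IsBiForm.dehomogenize_injective (hF : IsBiForm F p q) (hG : IsBiForm G p q) {t : ℂ}
    (h : dehomogenize t F = dehomogenize t G) : F = G :=
  sub_eq_zero.mp <| IsBiForm.eq_zero_of_dehomogenize_eq_zero (hF.sub hG) <| by
    rw [map_sub, h, sub_self]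

lemma IsBiForm.degreeOf_dehomogenize_le (hF : IsBiForm F p q) (t : ℂ) (i : Fin 2) :
    degreeOf i (dehomogenize t F) ≤ ![p, q] i := by
  refine degreeOf_aeval_le fun d hd ↦ ?_
  obtain ⟨rfl, rfl⟩ := hF.add_eq_of_mem_support hd
  have hchart (j : Fin 2) : degreeOf i (1 + C t * X j) ≤ if i = j then 1 else 0 :=
    (degreeOf_add_le _ _ _).trans <| max_le (by simp) <|
      (degreeOf_C_mul_le _ _ _).trans (by simp [degreeOf_X])
  rw [Finsupp.sum_fintype _ _ (by simp)]
  simp only [Fintype.sum_sum_type, Fin.sum_univ_two, Sum.elim_inl, Sum.elim_inr,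
    Matrix.cons_val_zero, Matrix.cons_val_one, degreeOf_X]
  grw [hchart 0, hchart 1]
  fin_cases i <;> simp

end BiForm

section Homogenization

/-- The bihomogenization of `f`, written in terms of the Taylor expansion of `f` at `c` to make
its order of vanishing at `c` visible. -/
def homogenize (t : ℂ) (c : Fin 2 → ℂ) (f : MvPolynomial (Fin 2) ℂ) : R4 :=
  ∑ d ∈ (translateAt c f).support, C (coeff d (translateAt c f)) *
    ∏ i, coordForm t (c i) i ^ d i * chartForm t i ^ (degreeOf i f - d i)

variable (t : ℂ) (c : Fin 2 → ℂ) (f : MvPolynomial (Fin 2) ℂ)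

lemma isBiForm_homogenize : IsBiForm (homogenize t c f) (degreeOf 0 f) (degreeOf 1 f) := by
  refine IsWeightedHomogeneous.sum _ _ _ fun d hd ↦ .C_mul ?_ _
  have hle (i : Fin 2) : d i ≤ degreeOf i f :=
    (monomial_le_degreeOf i hd).trans (degreeOf_translateAt_le c i f)
  have hdeg (i : Fin 2) : IsWeightedHomogeneous biWeight
      (coordForm t (c i) i ^ d i * chartForm t i ^ (degreeOf i f - d i))
      (degreeOf i f • biWeight (lineVar i 0)) := by
    rw [← Nat.add_sub_of_le (hle i), add_smul, Nat.add_sub_of_le (hle i)]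
    exact ((isWeightedHomogeneous_coordForm t (c i) i).pow _).mul
      ((isWeightedHomogeneous_chartForm t i).pow _)
  convert IsWeightedHomogeneous.prod Finset.univ _ _ fun i _ ↦ hdeg i
  all_goals simp [biWeight, lineVar, Fin.sum_univ_two]

@[simp]
lemma dehomogenize_homogenize : dehomogenize t (homogenize t c f) = f := by
  conv_rhs => rw [← sum_coeff_translateAt_mul_prod c f]
  simp [homogenize, algHom_C]

variable {t c f}

lemma homogenize_mem_pow {J : Ideal R4} (hJ : ∀ i, coordForm t (c i) i ∈ J) {m : ℕ}
    (hm : m ≤ ordAt c f) : homogenize t c f ∈ J ^ m := by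
  refine Ideal.sum_mem _ fun d hd ↦ Ideal.mul_mem_left _ _ ?_
  have hdeg : m ≤ ∑ i, d i := by
    by_contra! hlt
    exact mem_support_iff.mp hd (le_ordAt_iff.mp hm d (by rwa [Finsupp.degree_eq_sum]))
  rw [Finset.prod_mul_distrib]
  refine Ideal.mul_mem_right _ _ (Ideal.pow_le_pow_right hdeg ?_)
  rw [← Finset.prod_pow_eq_pow_sum]
  exact Ideal.prod_mem_prod fun i _ ↦ Ideal.pow_mem_pow (hJ i) _

lemma homogenize_eq_homogenize (c' : Fin 2 → ℂ) : homogenize t c f = homogenize t c' f :=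
  (isBiForm_homogenize t c f).dehomogenize_injective (isBiForm_homogenize t c' f)
    (t := t) (by simp)

end Homogenization

section Points

lemma exists_const_of_injOn {ι α β : Type*} [Nonempty α] {g : α → β} {T : Set α}
    (hg : T.InjOn g) {s : Finset ι} {x : ι → α} (hx : ∀ i ∈ s, x i ∈ T)
    (h : ∃ b, ∀ i ∈ s, g (x i) = b) : ∃ a, ∀ i ∈ s, x i = a := by
  obtain ⟨b, hb⟩ := h
  rcases s.eq_empty_or_nonempty with rfl | ⟨i₀, hi₀⟩
  · simp
  · exact ⟨x i₀, fun i hi ↦ hg (hx i hi) (hx i₀ hi₀) ((hb i hi).trans (hb i₀ hi₀).symm)⟩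

/-- The points of `ℙ¹` at which `x₀ - t x₁` does not vanish. -/
def affineChart (t : ℂ) : Set ProjLine := {v | v.rep 0 - t * v.rep 1 ≠ 0}

/-- The coordinate `x₁ / (x₀ - t x₁)` on `affineChart t`; outside the chart it has the junk
value `0`. -/
def affineCoord (t : ℂ) (v : ProjLine) : ℂ := v.rep 1 / (v.rep 0 - t * v.rep 1)

/-- The affine coordinates of a point of `ℙ¹ × ℙ¹` in the chart of parameter `t`. -/
def affinePoint (t : ℂ) (P : ProjLine × ProjLine) : Fin 2 → ℂ :=
  ![affineCoord t P.1, affineCoord t P.2]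

variable {t : ℂ} {P : ProjLine × ProjLine}

lemma injOn_affineCoord : Set.InjOn (affineCoord t) (affineChart t) := by
  intro v hv w hw h
  rw [affineCoord, affineCoord, div_eq_div_iff hv hw] at h
  rw [← v.mk_rep, ← w.mk_rep, Projectivization.mk_eq_mk_iff']
  refine ⟨(v.rep 0 - t * v.rep 1) / (w.rep 0 - t * w.rep 1), funext fun i ↦ ?_⟩
  rw [Pi.smul_apply, smul_eq_mul, div_mul_eq_mul_div, div_eq_iff hw]
  revert i
  rw [Fin.forall_fin_two]
  exact ⟨by linear_combination (-t) * h, by linear_combination -h⟩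

lemma exists_subset_affineChart (A : Finset ProjLine) : ∃ t : ℂ, ↑A ⊆ affineChart t := by
  classical
  obtain ⟨t, ht⟩ := Infinite.exists_notMem_finset (A.image fun v ↦ v.rep 0 / v.rep 1)
  refine ⟨t, fun v hv hvt ↦ ht (Finset.mem_image.mpr ⟨v, hv, ?_⟩)⟩
  rw [sub_eq_zero] at hvt
  have hv1 : v.rep 1 ≠ 0 := fun hv1 ↦ v.rep_nonzero <| funext fun i ↦ by
    fin_cases i <;> simp [hvt, hv1]
  rw [hvt, mul_div_cancel_right₀ _ hv1]

lemma span_coordForm_affineCoord {v : ProjLine} (hv : v ∈ affineChart t) (i : Fin 2) :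
    Ideal.span {coordForm t (affineCoord t v) i} =
      Ideal.span {C (v.rep 1) * X (lineVar i 0) - C (v.rep 0) * X (lineVar i 1)} := by
  have hunit : IsUnit (C (t * v.rep 1 - v.rep 0) : R4) :=
    (isUnit_iff_ne_zero.mpr (by rw [← neg_sub]; exact neg_ne_zero.mpr hv)).map C
  have hcoord : affineCoord t v * (v.rep 0 - t * v.rep 1) = v.rep 1 := div_mul_cancel₀ _ hv
  rw [← Ideal.span_singleton_mul_left_unit hunit]
  congr 2
  have hC := congrArg (C : ℂ → R4) hcoord
  simp only [C_mul, C_sub] at hC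
  simp only [coordForm, chartForm, C_mul, C_sub]
  linear_combination (X (lineVar i 0) - C t * X (lineVar i 1)) * hC

lemma pointIdeal_eq_span_coordForm (hP : P ∈ affineChart t ×ˢ affineChart t) :
    pointIdeal P = Ideal.span (Set.range fun i ↦ coordForm t (affinePoint t P i) i) := by
  have hrange : (Set.range fun i ↦ coordForm t (affinePoint t P i) i) =
      {coordForm t (affineCoord t P.1) 0, coordForm t (affineCoord t P.2) 1} := by
    ext; simp [affinePoint, eq_comm]
  rw [pointIdeal, hrange, Ideal.span_insert, Ideal.span_insert, span_coordForm_affineCoord hP.1,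
    span_coordForm_affineCoord hP.2]
  rfl

lemma coordForm_mem_pointIdeal (hP : P ∈ affineChart t ×ˢ affineChart t) (i : Fin 2) :
    coordForm t (affinePoint t P i) i ∈ pointIdeal P := by
  rw [pointIdeal_eq_span_coordForm hP]
  exact Ideal.subset_span ⟨i, rfl⟩

lemma le_ordAt_dehomogenize (hP : P ∈ affineChart t ×ˢ affineChart t) {m : ℕ} {F : R4}
    (hF : F ∈ pointIdeal P ^ m) : m ≤ ordAt (affinePoint t P) (dehomogenize t F) := by
  have hmap : (pointIdeal P).map (dehomogenize t) ≤ vanishingOrderIdeal (affinePoint t P) 1 := by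
    rw [pointIdeal_eq_span_coordForm hP, Ideal.map_span, Ideal.span_le]
    rintro _ ⟨_, ⟨i, rfl⟩, rfl⟩
    simpa using X_sub_C_pow_mem_vanishingOrderIdeal (affinePoint t P) i 1
  have hFm := Ideal.mem_map_of_mem (dehomogenize t) hF
  rw [Ideal.map_pow] at hFm
  exact vanishingOrderIdeal_one_pow_le _ m (Ideal.pow_right_mono hmap m hFm)

end Points

section SymbolicPowers

variable {t : ℂ} {Z : Finset (ProjLine × ProjLine)} {m : ℕ}

lemma mem_symbPow {F : R4} : F ∈ symbPow Z m ↔ ∀ P ∈ Z, F ∈ pointIdeal P ^ m := by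
  simp [symbPow]

variable [DecidableEq (Fin 2 → ℂ)] (hZ : ↑Z ⊆ affineChart t ×ˢ affineChart t)

include hZ

lemma dehomogenize_mem_fatPointIdeal {F : R4} (hF : F ∈ symbPow Z m) :
    dehomogenize t F ∈ fatPointIdeal (Z.image (affinePoint t)) fun _ ↦ m := by
  rw [mem_fatPointIdeal, Finset.forall_mem_image]
  exact fun P hP ↦ le_ordAt_dehomogenize (hZ hP) (mem_symbPow.mp hF P hP)

lemma homogenize_mem_symbPow (c : Fin 2 → ℂ) {f : MvPolynomial (Fin 2) ℂ}
    (hf : f ∈ fatPointIdeal (Z.image (affinePoint t)) fun _ ↦ m) :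
    homogenize t c f ∈ symbPow Z m := by
  refine mem_symbPow.mpr fun P hP ↦ ?_
  rw [homogenize_eq_homogenize (affinePoint t P)]
  exact homogenize_mem_pow (coordForm_mem_pointIdeal (hZ hP))
    (mem_fatPointIdeal.mp hf _ (Finset.mem_image_of_mem _ hP))

lemma alphaPlus_le_degreeOf_add {f : MvPolynomial (Fin 2) ℂ} (hf0 : f ≠ 0)
    (hf : f ∈ fatPointIdeal (Z.image (affinePoint t)) fun _ ↦ m) :
    alphaPlus (symbPow Z m) ≤ degreeOf 0 f + degreeOf 1 f := by
  refine Nat.sInf_le ⟨_, _, rfl, homogenize t 0 f, homogenize_mem_symbPow hZ 0 hf, fun h0 ↦ hf0 ?_,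
    isBiForm_homogenize t 0 f⟩
  rw [← dehomogenize_homogenize t 0 f, h0, map_zero]

lemma exists_degreeOf_add_le_alphaPlus (hα : alphaPlus (symbPow Z m) ≠ 0) :
    ∃ f ≠ 0, f ∈ fatPointIdeal (Z.image (affinePoint t)) (fun _ ↦ m) ∧
      degreeOf 0 f + degreeOf 1 f ≤ alphaPlus (symbPow Z m) := by
  obtain ⟨p, q, hpq, F, hF, hF0, hFpq⟩ :=
    Nat.sInf_mem (Nat.nonempty_of_pos_sInf (Nat.pos_of_ne_zero hα))
  refine ⟨dehomogenize t F, fun h0 ↦ hF0 (hFpq.eq_zero_of_dehomogenize_eq_zero h0),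
    dehomogenize_mem_fatPointIdeal hZ hF, ?_⟩
  exact (add_le_add (hFpq.degreeOf_dehomogenize_le t 0) (hFpq.degreeOf_dehomogenize_le t 1)).trans
    hpq.le

end SymbolicPowers

/-- If for the radical ideal `I` of a finite set `Z` of distinct points of `ℙ¹ × ℙ¹` one has
`α⁺(I^{(m+1)}) = α⁺(I^{(m)}) + 1` for some `m ≥ 1`, then all points of `Z` lie on a single
vertical or horizontal fiber: they all share the first coordinate or all share the second. -/
theorem alphaPlus_jump_one_fiber (Z : Finset (ProjLine × ProjLine)) (m : ℕ) (hm : 1 ≤ m)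
    (h : alphaPlus (symbPow Z (m + 1)) = alphaPlus (symbPow Z m) + 1) :
    (∃ v : ProjLine, ∀ P ∈ Z, P.1 = v) ∨ (∃ w : ProjLine, ∀ P ∈ Z, P.2 = w) := by
  classical
  obtain ⟨t, ht⟩ := exists_subset_affineChart (Z.image Prod.fst ∪ Z.image Prod.snd)
  have hZ : ↑Z ⊆ affineChart t ×ˢ affineChart t := fun P hP ↦
    ⟨ht (Finset.mem_union_left _ (Finset.mem_image_of_mem _ hP)),
      ht (Finset.mem_union_right _ (Finset.mem_image_of_mem _ hP))⟩
  obtain ⟨f, hf0, hf, hdeg⟩ := exists_degreeOf_add_le_alphaPlus hZ (m := m + 1) (by omega)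
  rcases exists_fiber_or_exists_degreeOf_add_two_le hf0 hf with hline | ⟨f', hf'0, hf', hdeg'⟩
  · simp only [Finset.forall_mem_image] at hline
    exact hline.imp (exists_const_of_injOn injOn_affineCoord fun P hP ↦ (hZ hP).1)
      (exists_const_of_injOn injOn_affineCoord fun P hP ↦ (hZ hP).2)
  · have hle := alphaPlus_le_degreeOf_add hZ hf'0 hf'
    omega
end
end
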